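/- arXiv:2201.00306 — 3 statements merged into one kernel-verified Lean document; each statement's English description precedes it below -/
import Mathlib

section
/- Let n ≥ 3, let 1 ≤ m < n, and let k ≥ 1. Let F(k) be the subgroup of SL_n(ℤ) generated by U⁺(kℤ), U⁻(kℤ) and M(kℤ), and let Γ_k be the intersection of all congruence subgroups of SL_n(ℤ) containing F(k). Then the commutator subgroup [Γ_k, Γ_k] is contained in F(k). -/
/-!
Write `E(I)` for the group generated by the elementary matrices with entries in an ideal `I`, and
`E(R, I)` for its normal closure in `SL_n(R)`. For every ideal `I` the image of the principal
congruence subgroup of `I` modulo `E(R, I)` commutes with all elementary matrices: its elements move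
`e_i` and `e_jᵀ` only by vectors with entries in `I`, and modulo `E(R, I)` the transvections along
these moved vectors agree with the elementary ones. Over a Euclidean domain the elementary matrices
generate, so this image is central.

The group `F(k) · SL_n(k²ℤ)` is a congruence subgroup, hence contains `Γ_k`. By centrality
`[Γ_k, Γ_k] ≤ [F(k), F(k)] · E(ℤ, k²ℤ)`, and Tits' inclusion `E(R, I²) ≤ E(I)` together with
`E(kℤ) ≤ F(k)` gives the claim. Tits' inclusion comes from the Koszul relations: a row orthogonal to
a unimodular column is a combination of rows supported on two indices, and since `n ≥ 3` a third
index is left to write the corresponding transvections as commutators.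
-/

open Matrix

/-- `U⁺(kℤ)`: matrices `I + X` in `SL_n(ℤ)` with `X` supported in the top-right
`m × (n−m)` block and all entries of `X` divisible by `k`. -/
def Uplus (n m k : ℕ) : Set (Matrix.SpecialLinearGroup (Fin n) ℤ) :=
  {g | ∀ i j : Fin n, if i = j then g.1 i j = 1
      else if (i : ℕ) < m ∧ m ≤ (j : ℕ) then (k : ℤ) ∣ g.1 i j
      else g.1 i j = 0}

/-- `U⁻(kℤ)`: matrices `I + X` in `SL_n(ℤ)` with `X` supported in the bottom-left
`(n−m) × m` block and all entries of `X` divisible by `k`. -/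
def Uminus (n m k : ℕ) : Set (Matrix.SpecialLinearGroup (Fin n) ℤ) :=
  {g | ∀ i j : Fin n, if i = j then g.1 i j = 1
      else if m ≤ (i : ℕ) ∧ (j : ℕ) < m then (k : ℤ) ∣ g.1 i j
      else g.1 i j = 0}

/-- `M(kℤ)`: block diagonal matrices `diag(A, B)` in `SL_n(ℤ)` with `A ∈ SL_m(ℤ)`,
`B ∈ SL_{n−m}(ℤ)`, and both `A` and `B` congruent to the identity mod `k`. -/
def Mblock (n m k : ℕ) (h : m ≤ n) : Set (Matrix.SpecialLinearGroup (Fin n) ℤ) :=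
  {g | (∀ i j : Fin n, ¬((i : ℕ) < m ↔ (j : ℕ) < m) → g.1 i j = 0) ∧
       (∀ i j : Fin n, (k : ℤ) ∣ (g.1 i j - if i = j then 1 else 0)) ∧
       (Matrix.of fun i j : Fin m => g.1 (Fin.castLE h i) (Fin.castLE h j)).det = 1 ∧
       (Matrix.of fun i j : Fin (n - m) =>
          g.1 ⟨m + (i : ℕ), by have := i.2; omega⟩ ⟨m + (j : ℕ), by have := j.2; omega⟩).det = 1}

/-- `F(k)`: the subgroup of `SL_n(ℤ)` generated by `U⁺(kℤ)`, `U⁻(kℤ)` and `M(kℤ)`. -/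
def Fgroup (n m k : ℕ) (h : m ≤ n) : Subgroup (Matrix.SpecialLinearGroup (Fin n) ℤ) :=
  Subgroup.closure (Uplus n m k ∪ Uminus n m k ∪ Mblock n m k h)

/-- A subgroup of `SL_n(ℤ)` is a congruence subgroup if it contains a principal congruence
subgroup `SL_n(Nℤ)` for some `N ≥ 1`. -/
def IsCongruenceSubgroup (n : ℕ) (H : Subgroup (Matrix.SpecialLinearGroup (Fin n) ℤ)) : Prop :=
  ∃ N : ℕ, 1 ≤ N ∧ ∀ g : Matrix.SpecialLinearGroup (Fin n) ℤ,
    (∀ i j : Fin n, (N : ℤ) ∣ (g.1 i j - if i = j then 1 else 0)) → g ∈ H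

/-- `Γ_k`: the intersection of all congruence subgroups of `SL_n(ℤ)` containing `F(k)`. -/
def GammaCl (n m k : ℕ) (h : m ≤ n) : Subgroup (Matrix.SpecialLinearGroup (Fin n) ℤ) :=
  sInf {H | IsCongruenceSubgroup n H ∧ Fgroup n m k h ≤ H}

section Commutators

variable {G : Type*} [Group G]

open scoped commutatorElement

lemma commutator_closure_right_le {H N : Subgroup G} [N.Normal] {S : Set G}
    (h : ∀ g ∈ H, ∀ s ∈ S, ⁅g, s⁆ ∈ N) : ⁅H, Subgroup.closure S⁆ ≤ N := by
  refine Subgroup.commutator_le.2 fun g hg x hx => ?_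
  induction hx using Subgroup.closure_induction with
  | mem s hs => exact h g hg s hs
  | one => simp
  | mul x y _ _ hx hy =>
    rw [commutatorElement_mul_right_eq_mul_conj, mul_assoc, mul_assoc, ← mul_assoc x]
    exact N.mul_mem hx (‹N.Normal›.conj_mem _ hy x)
  | inv x _ hx =>
    rw [commutatorElement_inv_right, ← commutatorElement_inv]
    exact ‹N.Normal›.conj_mem' _ (N.inv_mem hx) x

lemma commutator_sup_normal_le (H K N : Subgroup G) [N.Normal] :
    ⁅H ⊔ N, K ⊔ N⁆ ≤ ⁅H, K⁆ ⊔ ⁅N, (⊤ : Subgroup G)⁆ := by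
  have conj_mem : ∀ g x, x ∈ ⁅N, (⊤ : Subgroup G)⁆ → g * x * g⁻¹ ∈ ⁅N, (⊤ : Subgroup G)⁆ :=
    fun g x hx => Subgroup.Normal.conj_mem inferInstance x hx g
  refine Subgroup.commutator_le.2 fun x hx y hy => ?_
  obtain ⟨h, hh, s, hs, rfl⟩ := Subgroup.mem_sup_of_normal_right.1 hx
  obtain ⟨k, hk, t, ht, rfl⟩ := Subgroup.mem_sup_of_normal_right.1 hy
  have hhk : ⁅h, k⁆ ∈ ⁅H, K⁆ := Subgroup.commutator_mem_commutator hh hk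
  have hs' : ⁅s, k * t⁆ ∈ ⁅N, (⊤ : Subgroup G)⁆ :=
    Subgroup.commutator_mem_commutator hs (Subgroup.mem_top _)
  have ht' : ⁅h, t⁆ ∈ ⁅N, (⊤ : Subgroup G)⁆ := by
    rw [← commutatorElement_inv]
    exact inv_mem (Subgroup.commutator_mem_commutator ht (Subgroup.mem_top _))
  have hsplit : ⁅h * s, k * t⁆ = h * ⁅s, k * t⁆ * h⁻¹ * (⁅h, k⁆ * (k * ⁅h, t⁆ * k⁻¹)) := by
    rw [commutatorElement_mul_left_eq_conj_mul, commutatorElement_mul_right_eq_mul_conj h k t]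
    simp only [mul_assoc]
  rw [hsplit]
  exact mul_mem (Subgroup.mem_sup_right (conj_mem h _ hs'))
    (mul_mem (Subgroup.mem_sup_left hhk) (Subgroup.mem_sup_right (conj_mem k _ ht')))

end Commutators

section VecTransvection

open scoped commutatorElement

lemma vecMulVec_single_single {ι R : Type*} [DecidableEq ι] [MulZeroClass R] (i j : ι) (a b : R) :
    vecMulVec (Pi.single i a) (Pi.single j b) = Matrix.single i j (a * b) := by
  ext x y
  simp only [vecMulVec_apply, Matrix.single_apply, Pi.single_apply, eq_comm (a := x),
    eq_comm (a := y)]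
  split_ifs <;> simp_all

variable {ι R : Type*} [Fintype ι] [DecidableEq ι] [CommRing R]

/-- The transvection `1 + v wᵀ` attached to a column `v` and a row `w` with `w ⬝ᵥ v = 0`, as an
element of the special linear group. -/
def vecTransvection (v w : ι → R) (h : w ⬝ᵥ v = 0) : Matrix.SpecialLinearGroup ι R :=
  ⟨1 + vecMulVec v w, by
    rw [vecMulVec_eq Unit, det_one_add_replicateCol_mul_replicateRow, h, add_zero]⟩

variable {v v' w w' : ι → R}

@[simp]
lemma coe_vecTransvection (h : w ⬝ᵥ v = 0) :
    (vecTransvection v w h : Matrix ι ι R) = 1 + vecMulVec v w := rfl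

lemma vecTransvection_add_right (h : w ⬝ᵥ v = 0) (h' : w' ⬝ᵥ v = 0) :
    vecTransvection v (w + w') (by rw [add_dotProduct, h, h', add_zero]) =
      vecTransvection v w h * vecTransvection v w' h' := by
  apply Subtype.ext
  simp only [Matrix.SpecialLinearGroup.coe_mul, coe_vecTransvection, add_mul, mul_add, one_mul,
    mul_one, vecMulVec_mul_vecMulVec, h, zero_smul, vecMulVec_zero, vecMulVec_add]
  abel

lemma vecTransvection_add_left (h : w ⬝ᵥ v = 0) (h' : w ⬝ᵥ v' = 0) :
    vecTransvection (v + v') w (by rw [dotProduct_add, h, h', add_zero]) =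
      vecTransvection v w h * vecTransvection v' w h' := by
  apply Subtype.ext
  simp only [Matrix.SpecialLinearGroup.coe_mul, coe_vecTransvection, add_mul, mul_add, one_mul,
    mul_one, vecMulVec_mul_vecMulVec, h', zero_smul, vecMulVec_zero, add_vecMulVec]
  abel

lemma map_vecTransvection_eq_of_sub_right {G : Type*} [Group G]
    (φ : Matrix.SpecialLinearGroup ι R →* G) (h : w ⬝ᵥ v = 0) (h' : w' ⬝ᵥ v = 0)
    (hφ : φ (vecTransvection v (w - w') (by rw [sub_dotProduct, h, h', sub_zero])) = 1) :
    φ (vecTransvection v w h) = φ (vecTransvection v w' h') := by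
  have hmul := vecTransvection_add_right (w := w - w')
    (by rw [sub_dotProduct, h, h', sub_zero]) h'
  simp only [sub_add_cancel] at hmul
  rw [hmul, map_mul, hφ, one_mul]

lemma map_vecTransvection_eq_of_sub_left {G : Type*} [Group G]
    (φ : Matrix.SpecialLinearGroup ι R →* G) (h : w ⬝ᵥ v = 0) (h' : w ⬝ᵥ v' = 0)
    (hφ : φ (vecTransvection (v - v') w (by rw [dotProduct_sub, h, h', sub_zero])) = 1) :
    φ (vecTransvection v w h) = φ (vecTransvection v' w h') := by
  have hmul := vecTransvection_add_left (v := v - v')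
    (by rw [dotProduct_sub, h, h', sub_zero]) h'
  simp only [sub_add_cancel] at hmul
  rw [hmul, map_mul, hφ, one_mul]

lemma vecTransvection_zero_left : vecTransvection 0 w (dotProduct_zero w) = 1 :=
  Subtype.ext (by simp)

lemma vecTransvection_zero_right : vecTransvection v 0 (zero_dotProduct v) = 1 :=
  Subtype.ext (by simp)

lemma vecTransvection_single_single {i j : ι} (hij : i ≠ j) (a b : R) :
    vecTransvection (Pi.single i a) (Pi.single j b) (by simp [hij]) =
      Matrix.SpecialLinearGroup.transvection hij (a * b) := by
  apply Subtype.ext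
  rw [coe_vecTransvection, Matrix.SpecialLinearGroup.transvection_coe,
    vecMulVec_single_single]

lemma toSpecialLinearGroup_eq_vecTransvection (t : TransvectionStruct ι R) :
    t.toSpecialLinearGroup =
      vecTransvection (Pi.single t.i 1) (Pi.single t.j t.c) (by simp [t.hij]) := by
  rw [vecTransvection_single_single t.hij, one_mul]
  rfl

lemma conj_vecTransvection (g : Matrix.SpecialLinearGroup ι R) (h : w ⬝ᵥ v = 0) :
    g * vecTransvection v w h * g⁻¹ =
      vecTransvection (g.1 *ᵥ v) (w ᵥ* (g⁻¹).1) (by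
        rw [dotProduct_mulVec, vecMul_vecMul, ← Matrix.SpecialLinearGroup.coe_mul, inv_mul_cancel,
          Matrix.SpecialLinearGroup.coe_one, vecMul_one, h]) := by
  apply Subtype.ext
  simp only [Matrix.SpecialLinearGroup.coe_mul, coe_vecTransvection, mul_add, add_mul, mul_one,
    mul_vecMulVec, vecMulVec_mul]
  rw [← Matrix.SpecialLinearGroup.coe_mul, mul_inv_cancel, Matrix.SpecialLinearGroup.coe_one]

/-- With `A = v e_pᵀ s` and `B = e_p wᵀ` the hypotheses say `A² = B² = BA = 0`, whence the
commutator of `1 + A` and `1 + B` is `1 + AB`. -/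
lemma commutator_vecTransvection_single {p : ι} (s : R) (hv : v p = 0) (hw : w p = 0)
    (h : w ⬝ᵥ v = 0) :
    ⁅vecTransvection v (Pi.single p s) (by simp [hv]),
        vecTransvection (Pi.single p 1) w (by simp [hw])⁆ =
      vecTransvection v (s • w) (by rw [smul_dotProduct, h, smul_zero]) := by
  rw [commutatorElement_def, mul_inv_eq_iff_eq_mul, mul_inv_eq_iff_eq_mul]
  apply Subtype.ext
  simp only [Matrix.SpecialLinearGroup.coe_mul, coe_vecTransvection, add_mul, mul_add, one_mul,
    mul_one, vecMulVec_mul_vecMulVec, smul_mul_assoc, vecMulVec_smul,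
    dotProduct_single, Pi.single_eq_same, hw, h, zero_smul, smul_zero,
    vecMulVec_zero, add_zero]
  abel

lemma vecTransvection_mem_of_eq_sum_right {κ : Type*}
    {H : Subgroup (Matrix.SpecialLinearGroup ι R)} {s : Finset κ} {f : κ → ι → R}
    (hw : w = ∑ k ∈ s, f k) (h : ∀ k, f k ⬝ᵥ v = 0) (hH : ∀ k, vecTransvection v (f k) (h k) ∈ H) :
    vecTransvection v w (by simp [hw, sum_dotProduct, h]) ∈ H := by
  classical
  subst hw
  induction s using Finset.induction_on with
  | empty => simpa only [Finset.sum_empty, vecTransvection_zero_right] using H.one_mem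
  | insert k s hk ih =>
    simp only [Finset.sum_insert hk]
    rw [vecTransvection_add_right (h k) (by simp [sum_dotProduct, h])]
    exact H.mul_mem (hH k) ih

lemma vecTransvection_mem_of_eq_sum_left {κ : Type*}
    {H : Subgroup (Matrix.SpecialLinearGroup ι R)} {s : Finset κ} {f : κ → ι → R}
    (hv : v = ∑ k ∈ s, f k) (h : ∀ k, w ⬝ᵥ f k = 0) (hH : ∀ k, vecTransvection (f k) w (h k) ∈ H) :
    vecTransvection v w (by simp [hv, dotProduct_sum, h]) ∈ H := by
  classical
  subst hv
  induction s using Finset.induction_on with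
  | empty => simpa only [Finset.sum_empty, vecTransvection_zero_left] using H.one_mem
  | insert k s hk ih =>
    simp only [Finset.sum_insert hk]
    rw [vecTransvection_add_left (h k) (by simp [dotProduct_sum, h])]
    exact H.mul_mem (hH k) ih

end VecTransvection

section Elementary

lemma dotProduct_eq_zero_of_mul_eq_zero {ι R : Type*} [Fintype ι] [CommSemiring R] {v w : ι → R}
    (h : ∀ i, v i * w i = 0) : w ⬝ᵥ v = 0 :=
  Finset.sum_eq_zero fun i _ => by rw [mul_comm, h]

variable {ι R : Type*} [Fintype ι] [DecidableEq ι] [CommRing R]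

variable (ι) in
/-- The group `E(I)` generated by the elementary matrices `1 + c E_{ij}` with `i ≠ j` and `c` in
the ideal `I`; the elementary group of `R` is the case `I = ⊤`. -/
def elementarySubgroup (I : Ideal R) : Subgroup (Matrix.SpecialLinearGroup ι R) :=
  Subgroup.closure {g | ∃ t : TransvectionStruct ι R, t.c ∈ I ∧ t.toSpecialLinearGroup = g}

variable (ι) in
/-- The relative elementary group `E(R, I)`: the normal closure of `E(I)` in the special linear
group. -/
def relElementarySubgroup (I : Ideal R) : Subgroup (Matrix.SpecialLinearGroup ι R) :=
  Subgroup.normalClosure (elementarySubgroup ι I)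

variable (ι) in
/-- The principal congruence subgroup of the matrices congruent to `1` modulo the ideal `I`. -/
def principalCongruenceSubgroup (I : Ideal R) : Subgroup (Matrix.SpecialLinearGroup ι R) :=
  (Matrix.SpecialLinearGroup.map (n := ι) (Ideal.Quotient.mk I)).ker

instance (I : Ideal R) : (relElementarySubgroup ι I).Normal :=
  Subgroup.normalClosure_normal

instance (I : Ideal R) : (principalCongruenceSubgroup ι I).Normal :=
  MonoidHom.normal_ker _

variable {I J : Ideal R}

lemma mem_principalCongruenceSubgroup {g : Matrix.SpecialLinearGroup ι R} :
    g ∈ principalCongruenceSubgroup ι I ↔ ∀ i j, g.1 i j - (1 : Matrix ι ι R) i j ∈ I := by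
  rw [principalCongruenceSubgroup, MonoidHom.mem_ker, Matrix.SpecialLinearGroup.ext_iff]
  refine forall₂_congr fun i j => ?_
  rw [← Ideal.Quotient.mk_eq_mk_iff_sub_mem, Matrix.SpecialLinearGroup.map_apply_coe,
    Matrix.SpecialLinearGroup.coe_one, RingHom.mapMatrix_apply, Matrix.map_apply,
    ← Matrix.map_one (Ideal.Quotient.mk I) (map_zero _) (map_one _), Matrix.map_apply]

lemma transvection_mem_elementarySubgroup {i j : ι} (hij : i ≠ j) {c : R} (hc : c ∈ I) :
    Matrix.SpecialLinearGroup.transvection hij c ∈ elementarySubgroup ι I :=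
  Subgroup.subset_closure ⟨⟨i, j, hij, c⟩, hc, rfl⟩

lemma elementarySubgroup_le_relElementarySubgroup :
    elementarySubgroup ι I ≤ relElementarySubgroup ι I :=
  Subgroup.le_normalClosure

lemma elementarySubgroup_mono (h : I ≤ J) : elementarySubgroup ι I ≤ elementarySubgroup ι J :=
  Subgroup.closure_mono fun _ ⟨t, ht, e⟩ => ⟨t, h ht, e⟩

lemma vecTransvection_mem_elementarySubgroup {v w : ι → R} (hvw : ∀ i, v i * w i = 0)
    (hI : ∀ i j, v i * w j ∈ I) :
    vecTransvection v w (dotProduct_eq_zero_of_mul_eq_zero hvw) ∈ elementarySubgroup ι I := by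
  have hrow (i : ι) : w ⬝ᵥ Pi.single i (v i) = 0 := by rw [dotProduct_single, mul_comm, hvw]
  have hentry (i j : ι) : Pi.single j (w j) ⬝ᵥ Pi.single i (v i) = 0 := by
    obtain rfl | hij := eq_or_ne i j
    · simp [mul_comm, hvw]
    · simp [hij]
  refine vecTransvection_mem_of_eq_sum_left (Finset.univ_sum_single v).symm hrow fun i =>
    vecTransvection_mem_of_eq_sum_right (Finset.univ_sum_single w).symm (hentry i) fun j => ?_
  obtain rfl | hij := eq_or_ne i j
  · have hone : vecTransvection (Pi.single i (v i)) (Pi.single i (w i)) (hentry i i) = 1 :=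
      Subtype.ext (by
        rw [coe_vecTransvection, vecMulVec_single_single, hvw, Matrix.single_zero, add_zero,
          Matrix.SpecialLinearGroup.coe_one])
    exact hone ▸ one_mem _
  · rw [vecTransvection_single_single hij]
    exact transvection_mem_elementarySubgroup hij (hI i j)

lemma vecTransvection_single_right_mem {v : ι → R} {p : ι} {s : R} (hv : v p = 0)
    (hI : ∀ i, v i * s ∈ I) :
    vecTransvection v (Pi.single p s) (by rw [single_dotProduct, hv, mul_zero]) ∈
      elementarySubgroup ι I := by
  refine vecTransvection_mem_elementarySubgroup (fun i => ?_) fun i j => ?_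
  · obtain rfl | hi := eq_or_ne i p
    · rw [hv, zero_mul]
    · rw [Pi.single_eq_of_ne hi, mul_zero]
  · obtain rfl | hj := eq_or_ne j p
    · rw [Pi.single_eq_same]; exact hI i
    · rw [Pi.single_eq_of_ne hj, mul_zero]; exact I.zero_mem

lemma vecTransvection_single_left_mem {w : ι → R} {p : ι} (hw : w p = 0) (hI : ∀ i, w i ∈ I) :
    vecTransvection (Pi.single p 1) w (by rw [dotProduct_single, hw, zero_mul]) ∈
      elementarySubgroup ι I := by
  refine vecTransvection_mem_elementarySubgroup (fun i => ?_) fun i j =>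
    Ideal.mul_mem_left _ _ (hI j)
  obtain rfl | hi := eq_or_ne i p
  · rw [hw, mul_zero]
  · rw [Pi.single_eq_of_ne hi, zero_mul]

end Elementary

section Koszul

variable {ι R : Type*} [DecidableEq ι] [CommRing R]

/-- The Koszul row `v b • e_a - v a • e_b`; these rows span the relations satisfied by a unimodular
column `v` (`eq_sum_koszul`). -/
def koszul (v : ι → R) (a b : ι) : ι → R :=
  Pi.single a (v b) - Pi.single b (v a)

lemma koszul_apply_of_notMem (v : ι → R) {a b x : ι} (hx : x ∉ ({a, b} : Set ι)) :
    koszul v a b x = 0 := by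
  simp only [Set.mem_insert_iff, Set.mem_singleton_iff, not_or] at hx
  simp [koszul, hx]

lemma indicator_compl_mul_smul_koszul (v : ι → R) (a b : ι) (c : R) (x : ι) :
    ({a, b}ᶜ : Set ι).indicator v x * (c • koszul v a b) x = 0 := by
  by_cases hx : x ∈ ({a, b} : Set ι)
  · rw [Set.indicator_of_notMem (Set.notMem_compl_iff.2 hx), zero_mul]
  · rw [Pi.smul_apply, koszul_apply_of_notMem v hx, smul_zero, mul_zero]

lemma koszul_indicator (v : ι → R) (a b : ι) :
    koszul (({a, b} : Set ι).indicator v) a b = koszul v a b := by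
  simp [koszul]

variable [Fintype ι]

lemma smul_koszul_dotProduct (v : ι → R) (a b : ι) (c : R) : (c • koszul v a b) ⬝ᵥ v = 0 := by
  rw [smul_dotProduct, koszul, sub_dotProduct, single_dotProduct, single_dotProduct,
    mul_comm, sub_self, smul_zero]

lemma smul_koszul_dotProduct_indicator (v : ι → R) (a b : ι) (c : R) :
    (c • koszul v a b) ⬝ᵥ ({a, b} : Set ι).indicator v = 0 := by
  rw [← koszul_indicator, smul_koszul_dotProduct]

lemma eq_sum_koszul {u v w : ι → R} (hu : u ⬝ᵥ v = 1) (hw : w ⬝ᵥ v = 0) :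
    w = ∑ ab : ι × ι, (w ab.1 * u ab.2) • koszul v ab.1 ab.2 := by
  ext x
  symm
  calc (∑ ab : ι × ι, (w ab.1 * u ab.2) • koszul v ab.1 ab.2) x
      = ∑ b, w x * u b * v b - ∑ a, w a * u x * v a := by
        simp only [Fintype.sum_prod_type, koszul, Finset.sum_apply, Pi.smul_apply, Pi.sub_apply,
          Pi.single_apply, smul_eq_mul, mul_sub, mul_ite, mul_zero, Finset.sum_sub_distrib]
        rw [Finset.sum_comm]
        simp only [Finset.sum_ite_eq, Finset.mem_univ, if_true]
    _ = w x * (u ⬝ᵥ v) - u x * (w ⬝ᵥ v) := by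
        simp only [dotProduct, Finset.mul_sum, mul_assoc, mul_left_comm]
    _ = w x := by rw [hu, hw, mul_one, mul_zero, sub_zero]

/-- Off `{a, b}` the supports of `v` and of the Koszul row are disjoint. -/
lemma vecTransvection_smul_koszul (v : ι → R) (a b : ι) (c : R) :
    vecTransvection v (c • koszul v a b) (smul_koszul_dotProduct v a b c) =
      vecTransvection (({a, b}ᶜ : Set ι).indicator v) (c • koszul v a b)
          (dotProduct_eq_zero_of_mul_eq_zero (indicator_compl_mul_smul_koszul v a b c)) *
        vecTransvection (({a, b} : Set ι).indicator v) (c • koszul v a b)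
          (smul_koszul_dotProduct_indicator v a b c) := by
  rw [← vecTransvection_add_left]
  simp only [Set.indicator_compl_add_self]

end Koszul

section RelativeElementary

open scoped commutatorElement

lemma exists_notMem_pair {ι : Type*} [Fintype ι] (hι : 3 ≤ Fintype.card ι) (a b : ι) :
    ∃ p, p ∉ ({a, b} : Set ι) := by
  classical
  obtain ⟨p, -, hp⟩ := Finset.exists_mem_notMem_of_card_lt_card
    (Finset.card_le_two (a := a) (b := b) |>.trans_lt hι)
  exact ⟨p, by simpa using hp⟩

variable {ι R : Type*} [Fintype ι] [DecidableEq ι] [CommRing R] {I J : Ideal R}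

lemma commutator_vecTransvection_koszul (v : ι → R) {a b p : ι} (hp : p ∉ ({a, b} : Set ι))
    (s t : R) :
    ⁅vecTransvection (({a, b} : Set ι).indicator v) (Pi.single p s)
          (by rw [single_dotProduct, Set.indicator_of_notMem hp, mul_zero]),
        vecTransvection (Pi.single p 1) (t • koszul v a b)
          (by rw [smul_dotProduct, dotProduct_single, koszul_apply_of_notMem v hp, zero_mul,
            smul_zero])⁆ =
      vecTransvection (({a, b} : Set ι).indicator v) ((s * t) • koszul v a b)
        (smul_koszul_dotProduct_indicator v a b (s * t)) := by
  simp only [mul_smul]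
  exact commutator_vecTransvection_single s (Set.indicator_of_notMem hp v)
    (by rw [Pi.smul_apply, koszul_apply_of_notMem v hp, smul_zero])
    (smul_koszul_dotProduct_indicator v a b t)

lemma vecTransvection_indicator_koszul_mem (hι : 3 ≤ Fintype.card ι) (v : ι → R) (a b : ι) {r : R}
    (hr : r ∈ I * J) :
    vecTransvection (({a, b} : Set ι).indicator v) (r • koszul v a b)
        (smul_koszul_dotProduct_indicator v a b r) ∈
      ⁅elementarySubgroup ι I, elementarySubgroup ι J⁆ := by
  obtain ⟨p, hp⟩ := exists_notMem_pair hι a b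
  induction hr using Submodule.mul_induction_on' with
  | mem_mul_mem s hs t ht =>
    rw [← commutator_vecTransvection_koszul v hp]
    exact Subgroup.commutator_mem_commutator
      (vecTransvection_single_right_mem (Set.indicator_of_notMem hp v)
        fun i => Ideal.mul_mem_left _ _ hs)
      (vecTransvection_single_left_mem
        (by rw [Pi.smul_apply, koszul_apply_of_notMem v hp, smul_zero])
        fun i => Ideal.mul_mem_right _ _ ht)
  | add x _ y _ hx hy =>
    simp only [add_smul]
    rw [vecTransvection_add_right (smul_koszul_dotProduct_indicator v a b x)
      (smul_koszul_dotProduct_indicator v a b y)]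
    exact mul_mem hx hy

lemma vecTransvection_koszul_mem (hι : 3 ≤ Fintype.card ι) (v : ι → R) (a b : ι) {r : R}
    (hr : r ∈ I * J) :
    vecTransvection v (r • koszul v a b) (smul_koszul_dotProduct v a b r) ∈
      elementarySubgroup ι (I * J) ⊔ ⁅elementarySubgroup ι I, elementarySubgroup ι J⁆ := by
  rw [vecTransvection_smul_koszul]
  refine Subgroup.mul_mem_sup ?_ (vecTransvection_indicator_koszul_mem hι v a b hr)
  exact vecTransvection_mem_elementarySubgroup (indicator_compl_mul_smul_koszul v a b r)
    fun x y => Ideal.mul_mem_left _ _ (Ideal.mul_mem_right _ _ hr)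

lemma vecTransvection_mem_of_unimodular (hι : 3 ≤ Fintype.card ι) {u v w : ι → R}
    (hu : u ⬝ᵥ v = 1) (hw : w ⬝ᵥ v = 0) (hIJ : ∀ i, w i ∈ I * J) :
    vecTransvection v w hw ∈
      elementarySubgroup ι (I * J) ⊔ ⁅elementarySubgroup ι I, elementarySubgroup ι J⁆ :=
  vecTransvection_mem_of_eq_sum_right (eq_sum_koszul hu hw) (fun _ => smul_koszul_dotProduct ..)
    fun ab => vecTransvection_koszul_mem hι v ab.1 ab.2 (Ideal.mul_mem_right _ _ (hIJ ab.1))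

theorem relElementarySubgroup_mul_le (hι : 3 ≤ Fintype.card ι) (I J : Ideal R) :
    relElementarySubgroup ι (I * J) ≤
      elementarySubgroup ι (I * J) ⊔ ⁅elementarySubgroup ι I, elementarySubgroup ι J⁆ := by
  rw [relElementarySubgroup, elementarySubgroup, Subgroup.normalClosure_closure_eq_normalClosure,
    Subgroup.normalClosure, Subgroup.closure_le]
  intro x hx
  obtain ⟨_, ⟨t, hc, rfl⟩, hconj⟩ := Group.mem_conjugatesOfSet_iff.1 hx
  obtain ⟨g, rfl⟩ := isConj_iff.1 hconj
  rw [toSpecialLinearGroup_eq_vecTransvection, conj_vecTransvection]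
  refine vecTransvection_mem_of_unimodular hι (u := Pi.single t.i 1 ᵥ* (g⁻¹).1) ?_ _ fun x => ?_
  · rw [dotProduct_mulVec, vecMul_vecMul, ← Matrix.SpecialLinearGroup.coe_mul, inv_mul_cancel,
      Matrix.SpecialLinearGroup.coe_one, vecMul_one, single_one_dotProduct, Pi.single_eq_same]
  · rw [single_vecMul]
    exact Ideal.mul_mem_right _ _ hc

lemma relElementarySubgroup_sq_le (hι : 3 ≤ Fintype.card ι) (I : Ideal R) :
    relElementarySubgroup ι (I * I) ≤ elementarySubgroup ι I :=
  (relElementarySubgroup_mul_le hι I I).trans <|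
    sup_le (elementarySubgroup_mono Ideal.mul_le_right) (Subgroup.commutator_le_self _)

end RelativeElementary

section PrincipalCongruence

variable {ι R : Type*} [DecidableEq ι] [CommRing R] {I : Ideal R} {v : ι → R}

lemma indicator_sub_single_mem {i j : ι} (hv : ∀ x, (v - Pi.single i 1 : ι → R) x ∈ I) (x : ι) :
    (({j, i} : Set ι).indicator v - Pi.single i 1 : ι → R) x ∈ I := by
  by_cases hx : x ∈ ({j, i} : Set ι)
  · rw [Pi.sub_apply, Set.indicator_of_mem hx]
    exact hv x
  · have hxi : x ≠ i := fun h => hx (by simp [h])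
    simp [Set.indicator_of_notMem hx, hxi]

lemma smul_koszul_sub_single_mem {i j : ι} (hij : i ≠ j)
    (hv : ∀ x, (v - Pi.single i 1 : ι → R) x ∈ I) (c : R) (x : ι) :
    (c • koszul v j i - Pi.single j c : ι → R) x ∈ I := by
  have hi : v i - 1 ∈ I := by simpa using hv i
  have hj : v j ∈ I := by simpa [hij.symm] using hv j
  have hsplit : c • koszul v j i - Pi.single j c =
      Pi.single j (c * (v i - 1)) - Pi.single i (c * v j) := by
    rw [koszul, smul_sub, ← Pi.single_smul, ← Pi.single_smul, mul_sub, mul_one, Pi.single_sub]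
    simp only [smul_eq_mul]
    abel
  rw [hsplit]
  have single_mem (k : ι) {r : R} (hr : r ∈ I) : (Pi.single k r : ι → R) x ∈ I := by
    rw [Pi.single_apply]
    split_ifs
    exacts [hr, I.zero_mem]
  exact I.sub_mem (single_mem j (I.mul_mem_left c hi)) (single_mem i (I.mul_mem_left c hj))

variable [Fintype ι]

lemma vecTransvection_mulVec_single_mem (g : Matrix.SpecialLinearGroup ι R) {i : ι} {z : ι → R}
    (h : z ⬝ᵥ (g.1 *ᵥ Pi.single i 1) = 0) (hz : ∀ x, z x ∈ I) :
    vecTransvection (g.1 *ᵥ Pi.single i 1) z h ∈ relElementarySubgroup ι I := by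
  have hzi : (z ᵥ* g.1) i = 0 := by
    rw [← h, dotProduct_mulVec, dotProduct_single, mul_one]
  have hzg : (z ᵥ* g.1) ᵥ* (g⁻¹).1 = z := by
    rw [vecMul_vecMul, ← Matrix.SpecialLinearGroup.coe_mul, mul_inv_cancel,
      Matrix.SpecialLinearGroup.coe_one, vecMul_one]
  have hE := vecTransvection_single_left_mem hzi fun x =>
    I.sum_mem fun y _ => I.mul_mem_right (g.1 y x) (hz y)
  have hconj := (inferInstance : (relElementarySubgroup ι I).Normal).conj_mem _
    (elementarySubgroup_le_relElementarySubgroup hE) g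
  rw [conj_vecTransvection] at hconj
  simpa only [hzg] using hconj

lemma mulVec_single_sub_single_mem {g : Matrix.SpecialLinearGroup ι R}
    (hg : g ∈ principalCongruenceSubgroup ι I) (i x : ι) :
    (g.1 *ᵥ Pi.single i 1 - Pi.single i 1 : ι → R) x ∈ I := by
  simpa [Matrix.one_apply, Pi.single_apply] using mem_principalCongruenceSubgroup.1 hg x i

lemma single_vecMul_sub_single_mem {g : Matrix.SpecialLinearGroup ι R}
    (hg : g ∈ principalCongruenceSubgroup ι I) (j : ι) (c : R) (x : ι) :
    (Pi.single j c ᵥ* g.1 - Pi.single j c : ι → R) x ∈ I := by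
  have hmem := I.mul_mem_left c (mem_principalCongruenceSubgroup.1 hg j x)
  simpa [mul_sub, Matrix.one_apply, Pi.single_apply, eq_comm] using hmem

/-- Both sides are commutators of elements with the same image: with a third index `p`,
`1 + v' e_pᵀ` and `1 + e_i e_pᵀ` agree modulo `E(I)`, where `v'` is the restriction of `v`, and so
do `1 + c e_p (koszul v j i)ᵀ` and `1 + c e_p e_jᵀ`. -/
lemma map_vecTransvection_indicator_koszul {G : Type*} [Group G]
    {φ : Matrix.SpecialLinearGroup ι R →* G} (hφ : elementarySubgroup ι I ≤ φ.ker)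
    (hι : 3 ≤ Fintype.card ι) {i j : ι} (hij : i ≠ j)
    (hv : ∀ x, (v - Pi.single i 1 : ι → R) x ∈ I) (c : R) :
    φ (vecTransvection (({j, i} : Set ι).indicator v) (c • koszul v j i)
        (smul_koszul_dotProduct_indicator v j i c)) =
      φ (vecTransvection (Pi.single i 1) (Pi.single j c) (by simp [hij])) := by
  obtain ⟨p, hp⟩ := exists_notMem_pair hι j i
  have hpj : p ≠ j := fun h => hp (by simp [h])
  have hpi : p ≠ i := fun h => hp (by simp [h])
  have hvp : ({j, i} : Set ι).indicator v p = 0 := Set.indicator_of_notMem hp v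
  have hkp : koszul v j i p = 0 := koszul_apply_of_notMem v hp
  have hleft : φ (vecTransvection (({j, i} : Set ι).indicator v) (Pi.single p 1) (by simp [hvp])) =
      φ (vecTransvection (Pi.single i 1) (Pi.single p 1) (by simp [hpi.symm])) := by
    refine map_vecTransvection_eq_of_sub_left φ _ _ (hφ (vecTransvection_single_right_mem
      (by simp [hvp, hpi]) fun x => I.mul_mem_right _ ?_))
    exact indicator_sub_single_mem hv x
  have hright : φ (vecTransvection (Pi.single p 1) (c • koszul v j i) (by simp [hkp])) =
      φ (vecTransvection (Pi.single p 1) (Pi.single j c) (by simp [hpj.symm])) :=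
    map_vecTransvection_eq_of_sub_right φ _ _ (hφ (vecTransvection_single_left_mem
      (by simp [hkp, hpj]) (smul_koszul_sub_single_mem hij hv c)))
  have hkoszul := commutator_vecTransvection_koszul v hp 1 c
  have hsingle := commutator_vecTransvection_single (v := Pi.single i 1) (w := Pi.single j c)
    (p := p) (1 : R) (by simp [hpi]) (by simp [hpj]) (by simp [hij])
  simp only [one_mul] at hkoszul
  simp only [one_smul] at hsingle
  rw [← hkoszul, map_commutatorElement, hleft, hright, ← map_commutatorElement, hsingle]

lemma map_vecTransvection_smul_koszul {G : Type*} [Group G]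
    {φ : Matrix.SpecialLinearGroup ι R →* G} (hφ : elementarySubgroup ι I ≤ φ.ker)
    (hι : 3 ≤ Fintype.card ι) {i j : ι} (hij : i ≠ j)
    (hv : ∀ x, (v - Pi.single i 1 : ι → R) x ∈ I) (c : R) :
    φ (vecTransvection v (c • koszul v j i) (smul_koszul_dotProduct v j i c)) =
      φ (vecTransvection (Pi.single i 1) (Pi.single j c) (by simp [hij])) := by
  have hcompl (x : ι) : ({j, i}ᶜ : Set ι).indicator v x ∈ I := by
    by_cases hx : x ∈ ({j, i} : Set ι)
    · rw [Set.indicator_of_notMem (Set.notMem_compl_iff.2 hx)]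
      exact I.zero_mem
    · have hxi : x ≠ i := fun h => hx (by simp [h])
      rw [Set.indicator_of_mem (Set.mem_compl hx)]
      simpa [hxi] using hv x
  have hone := hφ (vecTransvection_mem_elementarySubgroup (indicator_compl_mul_smul_koszul v j i c)
    fun x y => I.mul_mem_right _ (hcompl x))
  rw [vecTransvection_smul_koszul, map_mul, MonoidHom.mem_ker.1 hone, one_mul,
    map_vecTransvection_indicator_koszul hφ hι hij hv]

lemma commutator_principalCongruenceSubgroup_le (hι : 3 ≤ Fintype.card ι) (I : Ideal R) :
    ⁅principalCongruenceSubgroup ι I, elementarySubgroup ι (⊤ : Ideal R)⁆ ≤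
      relElementarySubgroup ι I := by
  refine commutator_closure_right_le ?_
  rintro g hg _ ⟨t, -, rfl⟩
  have hker : elementarySubgroup ι I ≤ (QuotientGroup.mk' (relElementarySubgroup ι I)).ker :=
    elementarySubgroup_le_relElementarySubgroup.trans (QuotientGroup.ker_mk' _).ge
  have hv := mulVec_single_sub_single_mem hg t.i
  rw [commutatorElement_def, toSpecialLinearGroup_eq_vecTransvection, conj_vecTransvection,
    ← QuotientGroup.ker_mk' (relElementarySubgroup ι I), MonoidHom.mem_ker, map_mul, map_inv,
    mul_inv_eq_one, ← map_vecTransvection_smul_koszul hker hι t.hij hv]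
  refine map_vecTransvection_eq_of_sub_right _ _ _ ?_
  refine (QuotientGroup.eq_one_iff _).2 (vecTransvection_mulVec_single_mem g _ fun x => ?_)
  have hw := single_vecMul_sub_single_mem (inv_mem hg) t.j t.c x
  have hkoszul := smul_koszul_sub_single_mem t.hij hv t.c x
  simpa using I.sub_mem hw hkoszul

end PrincipalCongruence

section Generation

variable {ι R : Type*} [Fintype ι] [DecidableEq ι] [CommRing R]

lemma specialLinearGroup_smul_eq_mulVec (g : Matrix.SpecialLinearGroup ι R) (v : ι → R) :
    g • v = g.1 *ᵥ v := rfl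

lemma smul_single_one_apply (g : Matrix.SpecialLinearGroup ι R) (i x : ι) :
    (g • (Pi.single i 1 : ι → R)) x = g.1 x i := by
  rw [specialLinearGroup_smul_eq_mulVec, mulVec_single_one]
  rfl

lemma vecTransvection_smul {v w : ι → R} (h : w ⬝ᵥ v = 0) (x : ι → R) :
    vecTransvection v w h • x = x + (w ⬝ᵥ x) • v := by
  rw [specialLinearGroup_smul_eq_mulVec, coe_vecTransvection, add_mulVec, one_mulVec,
    vecMulVec_mulVec, op_smul_eq_smul]

lemma transvection_smul {i j : ι} (hij : i ≠ j) (c : R) (v : ι → R) :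
    Matrix.SpecialLinearGroup.transvection hij c • v = v + Pi.single i (c * v j) := by
  rw [specialLinearGroup_smul_eq_mulVec, Matrix.SpecialLinearGroup.transvection_coe, add_mulVec,
    one_mulVec, single_mulVec_eq, ← Pi.single_smul, smul_eq_mul, mul_one]

variable (R) in
/-- The subgroup of the matrices whose columns outside `s` are those of the identity. -/
def columnSubgroup (s : Finset ι) : Subgroup (Matrix.SpecialLinearGroup ι R) :=
  fixingSubgroup _ ((fun i => Pi.single i (1 : R)) '' (s : Set ι)ᶜ)

lemma mem_columnSubgroup {s : Finset ι} {A : Matrix.SpecialLinearGroup ι R} :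
    A ∈ columnSubgroup R s ↔ ∀ i ∉ s, A • (Pi.single i 1 : ι → R) = Pi.single i 1 := by
  simp [columnSubgroup, mem_fixingSubgroup_iff]

lemma transvection_mem_inf_columnSubgroup {s : Finset ι} {i j : ι} (hij : i ≠ j) (hj : j ∈ s)
    (c : R) :
    Matrix.SpecialLinearGroup.transvection hij c ∈
      elementarySubgroup ι ⊤ ⊓ columnSubgroup R s := by
  refine ⟨transvection_mem_elementarySubgroup hij trivial, mem_columnSubgroup.2 fun x hx => ?_⟩
  rw [transvection_smul, Pi.single_eq_of_ne (ne_of_mem_of_not_mem hj hx), mul_zero, Pi.single_zero,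
    add_zero]

lemma exists_smul_apply_eq_one_of_isUnit {s : Finset ι} {v : ι → R} {a b : ι} (hab : a ≠ b)
    (hb : b ∈ s) (hunit : IsUnit (v b)) :
    ∃ g ∈ elementarySubgroup ι ⊤ ⊓ columnSubgroup R s, (g • v) a = 1 := by
  obtain ⟨c, hc⟩ := hunit.exists_left_inv
  refine ⟨_, transvection_mem_inf_columnSubgroup hab hb ((1 - v a) * c), ?_⟩
  rw [transvection_smul, Pi.add_apply, Pi.single_eq_same, mul_assoc, hc, mul_one, add_sub_cancel]

lemma vecMul_apply_eq_zero_of_mem_columnSubgroup {s : Finset ι} {u : ι → R}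
    (hu : ∀ x ∉ s, u x = 0) {g : Matrix.SpecialLinearGroup ι R} (hg : g ∈ columnSubgroup R s)
    {x : ι} (hx : x ∉ s) : (u ᵥ* g.1) x = 0 := by
  rw [← mul_one ((u ᵥ* g.1) x), ← dotProduct_single, ← dotProduct_mulVec,
    ← specialLinearGroup_smul_eq_mulVec, mem_columnSubgroup.1 hg x hx, dotProduct_single,
    hu x hx, zero_mul]

lemma vecMul_inv_dotProduct_smul (g : Matrix.SpecialLinearGroup ι R) (u v : ι → R) :
    (u ᵥ* (g⁻¹).1) ⬝ᵥ (g • v) = u ⬝ᵥ v := by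
  rw [← dotProduct_mulVec, ← specialLinearGroup_smul_eq_mulVec, inv_smul_smul]

lemma apply_self_eq_one_of_mem_columnSubgroup_singleton {a : ι}
    {A : Matrix.SpecialLinearGroup ι R} (hA : A ∈ columnSubgroup R {a}) : A.1 a a = 1 := by
  have hcol : A.1 = (1 : Matrix ι ι R).updateCol a (A.1.col a) := by
    ext x i
    obtain rfl | hi := eq_or_ne i a
    · simp
    · have h := congrFun (mem_columnSubgroup.1 hA i (by simpa using hi)) x
      simpa [smul_single_one_apply, hi, Matrix.one_apply, Pi.single_apply] using h
  calc A.1 a a = cramer 1 (A.1.col a) a := by rw [cramer_one]; rfl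
    _ = A.1.det := by rw [cramer_apply, ← hcol]
    _ = 1 := A.2

lemma exists_mul_mem_columnSubgroup {a : ι} {s : Finset ι}
    {A : Matrix.SpecialLinearGroup ι R} (hA : A ∈ columnSubgroup R (insert a s))
    (haa : A.1 a a = 1) :
    ∃ t ∈ elementarySubgroup ι (⊤ : Ideal R), t * A ∈ columnSubgroup R s := by
  have hdot : Pi.single a 1 ⬝ᵥ (Pi.single a 1 - A • (Pi.single a 1 : ι → R)) = 0 := by
    simp [smul_single_one_apply, haa]
  refine ⟨vecTransvection _ _ hdot,
    vecTransvection_single_right_mem (by simpa using hdot) fun _ => trivial,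
    mem_columnSubgroup.2 fun i hi => ?_⟩
  rw [mul_smul, vecTransvection_smul]
  obtain rfl | hia := eq_or_ne i a
  · simp [smul_single_one_apply, haa]
  · rw [mem_columnSubgroup.1 hA i (by simp [hi, hia])]
    simp [hia.symm]

end Generation

section Euclidean

variable {ι R : Type*} [Fintype ι] [DecidableEq ι] [EuclideanDomain R]

lemma exists_isUnit_smul_apply {s : Finset ι} {u v : ι → R} (huv : u ⬝ᵥ v = 1)
    (hu : ∀ x ∉ s, u x = 0) :
    ∃ g ∈ elementarySubgroup ι ⊤ ⊓ columnSubgroup R s, ∃ b ∈ s, IsUnit ((g • v) b) := by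
  let E := elementarySubgroup ι ⊤ ⊓ columnSubgroup R s
  have hdvd_one {g : Matrix.SpecialLinearGroup ι R} (hg : g ∈ E) {r : R}
      (hr : ∀ x ∈ s, r ∣ (g • v) x) : r ∣ 1 := by
    rw [← huv, ← vecMul_inv_dotProduct_smul g]
    refine Finset.dvd_sum fun x _ => ?_
    by_cases hx : x ∈ s
    · exact (hr x hx).mul_left _
    · rw [vecMul_apply_eq_zero_of_mem_columnSubgroup hu (inv_mem hg.2) hx, zero_mul]
      exact dvd_zero r
  have hne : {r : R | r ≠ 0 ∧ ∃ g ∈ E, ∃ b ∈ s, (g • v) b = r}.Nonempty := by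
    by_contra! hempty
    refine zero_ne_one (zero_dvd_iff.1 (hdvd_one (one_mem E) fun x hx => ?_)).symm
    rw [zero_dvd_iff]
    by_contra hx0
    exact (Set.eq_empty_iff_forall_notMem.1 hempty _ ⟨hx0, 1, one_mem E, x, hx, rfl⟩)
  obtain ⟨_, ⟨hr0, g, hg, b, hb, rfl⟩, hmin⟩ := EuclideanDomain.r_wellFounded.has_min _ hne
  refine ⟨g, hg, b, hb, isUnit_of_dvd_one (hdvd_one hg fun x hx => ?_)⟩
  by_contra hndvd
  have hxb : x ≠ b := by rintro rfl; exact hndvd dvd_rfl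
  refine hmin ((g • v) x % (g • v) b) ⟨fun h => hndvd (EuclideanDomain.mod_eq_zero.1 h),
    _, mul_mem (transvection_mem_inf_columnSubgroup hxb hb (-((g • v) x / (g • v) b))) hg, x, hx,
    ?_⟩ (EuclideanDomain.mod_lt _ hr0)
  rw [mul_smul, transvection_smul, Pi.add_apply, Pi.single_eq_same,
    EuclideanDomain.mod_eq_sub_mul_div]
  ring

lemma exists_smul_apply_eq_one {s : Finset ι} {u v : ι → R} (huv : u ⬝ᵥ v = 1)
    (hu : ∀ x ∉ s, u x = 0) {a c : ι} (ha : a ∈ s) (hc : c ∈ s) (hca : c ≠ a) :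
    ∃ g ∈ elementarySubgroup ι ⊤ ⊓ columnSubgroup R s, (g • v) a = 1 := by
  obtain ⟨g, hg, b, hb, hunit⟩ := exists_isUnit_smul_apply huv hu
  obtain rfl | hab := eq_or_ne a b
  · obtain ⟨t, ht, htc⟩ := exists_smul_apply_eq_one_of_isUnit hca ha hunit
    obtain ⟨t', ht', hta⟩ :=
      exists_smul_apply_eq_one_of_isUnit (v := t • g • v) hca.symm hc (by simp [htc])
    exact ⟨t' * (t * g), mul_mem ht' (mul_mem ht hg), by rwa [mul_smul, mul_smul]⟩
  · obtain ⟨t, ht, hta⟩ := exists_smul_apply_eq_one_of_isUnit hab hb hunit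
    exact ⟨t * g, mul_mem ht hg, by rwa [mul_smul]⟩

lemma exists_mul_apply_self_eq_one {s : Finset ι} {a : ι} (ha : a ∈ s)
    {A : Matrix.SpecialLinearGroup ι R} (hA : A ∈ columnSubgroup R s) :
    ∃ g ∈ elementarySubgroup ι ⊤ ⊓ columnSubgroup R s, (g * A).1 a a = 1 := by
  obtain rfl | hs := eq_or_ne s {a}
  · exact ⟨1, one_mem _, by rw [one_mul, apply_self_eq_one_of_mem_columnSubgroup_singleton hA]⟩
  obtain ⟨c, hc, hca⟩ := (Finset.nontrivial_iff_ne_singleton ha).2 hs |>.exists_ne a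
  obtain ⟨g, hg, hga⟩ := exists_smul_apply_eq_one (u := Pi.single a 1 ᵥ* (A⁻¹).1)
    (v := A • Pi.single a 1) (by rw [vecMul_inv_dotProduct_smul]; simp)
    (fun x hx => vecMul_apply_eq_zero_of_mem_columnSubgroup
      (fun y hy => Pi.single_eq_of_ne (ne_of_mem_of_not_mem ha hy).symm 1) (inv_mem hA) hx)
    ha hc hca
  exact ⟨g, hg, by rwa [← mul_smul, smul_single_one_apply] at hga⟩

lemma columnSubgroup_le_elementarySubgroup (s : Finset ι) :
    columnSubgroup R s ≤ elementarySubgroup ι ⊤ := by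
  induction s using Finset.induction_on with
  | empty =>
    intro A hA
    have hone : A = 1 := Matrix.SpecialLinearGroup.ext _ _ fun x i => by
      have hcol := congrFun (mem_columnSubgroup.1 hA i (Finset.notMem_empty i)) x
      simpa [smul_single_one_apply, Matrix.one_apply, Pi.single_apply] using hcol
    exact hone ▸ one_mem _
  | insert a s _ ih =>
    intro A hA
    obtain ⟨g, hg, hgA⟩ := exists_mul_apply_self_eq_one (Finset.mem_insert_self a s) hA
    obtain ⟨t, ht, htgA⟩ := exists_mul_mem_columnSubgroup (mul_mem hg.2 hA) hgA
    exact (Subgroup.mul_mem_cancel_left _ hg.1).1 <|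
      (Subgroup.mul_mem_cancel_left _ ht).1 (ih htgA)

theorem elementarySubgroup_top : elementarySubgroup ι (⊤ : Ideal R) = ⊤ := by
  refine top_le_iff.1 (le_trans (fun A _ => mem_columnSubgroup.2 fun i hi => ?_)
    (columnSubgroup_le_elementarySubgroup Finset.univ))
  exact absurd (Finset.mem_univ i) hi

end Euclidean

lemma commutator_sup_principalCongruenceSubgroup_le {ι R : Type*} [Fintype ι] [DecidableEq ι]
    [EuclideanDomain R] (hι : 3 ≤ Fintype.card ι) {I : Ideal R}
    {H : Subgroup (Matrix.SpecialLinearGroup ι R)} (hH : elementarySubgroup ι I ≤ H) :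
    ⁅H ⊔ principalCongruenceSubgroup ι (I * I), H ⊔ principalCongruenceSubgroup ι (I * I)⁆ ≤ H :=
  calc ⁅H ⊔ principalCongruenceSubgroup ι (I * I), H ⊔ principalCongruenceSubgroup ι (I * I)⁆
      ≤ ⁅H, H⁆ ⊔ ⁅principalCongruenceSubgroup ι (I * I), elementarySubgroup ι ⊤⁆ := by
        rw [elementarySubgroup_top]
        exact commutator_sup_normal_le H H _
    _ ≤ ⁅H, H⁆ ⊔ relElementarySubgroup ι (I * I) :=
        sup_le_sup_left (commutator_principalCongruenceSubgroup_le hι (I * I)) _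
    _ ≤ H ⊔ elementarySubgroup ι I :=
        sup_le_sup (Subgroup.commutator_le_self H) (relElementarySubgroup_sq_le hι I)
    _ ≤ H := sup_le le_rfl hH

section Block

lemma transvection_apply {ι R : Type*} [Fintype ι] [DecidableEq ι] [CommRing R] {i j : ι}
    (hij : i ≠ j) (c : R) (x y : ι) :
    (Matrix.SpecialLinearGroup.transvection hij c).1 x y =
      (if x = y then 1 else 0) + if i = x ∧ j = y then c else 0 := by
  rw [Matrix.SpecialLinearGroup.transvection_coe, Matrix.add_apply, Matrix.one_apply,
    Matrix.single_apply]

lemma det_submatrix_transvection {ι κ R : Type*} [Fintype ι] [DecidableEq ι] [Fintype κ]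
    [DecidableEq κ] [CommRing R] {f : κ → ι} (hf : Function.Injective f) {i j : ι} (hij : i ≠ j)
    (c : R) : ((Matrix.SpecialLinearGroup.transvection hij c).1.submatrix f f).det = 1 := by
  have hsub : (Matrix.SpecialLinearGroup.transvection hij c).1.submatrix f f =
      1 + vecMulVec (Pi.single i 1 ∘ f) (Pi.single j c ∘ f) := by
    rw [Matrix.SpecialLinearGroup.transvection_coe, ← one_mul c, ← vecMulVec_single_single,
      one_mul, ← submatrix_one f hf]
    rfl
  have hdot : (Pi.single j c ∘ f) ⬝ᵥ (Pi.single i 1 ∘ f) = 0 :=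
    dotProduct_eq_zero_of_mul_eq_zero fun x => by
      obtain hx | hx := ne_or_eq (f x) i
      · simp [hx]
      · simp [hx, hij]
  rw [hsub, vecMulVec_eq Unit, det_one_add_replicateCol_mul_replicateRow, hdot, add_zero]

variable {n m k : ℕ} {i j : Fin n} {c : ℤ}

lemma transvection_mem_Uplus (hij : i ≠ j) (hi : (i : ℕ) < m) (hj : m ≤ (j : ℕ))
    (hc : (k : ℤ) ∣ c) : Matrix.SpecialLinearGroup.transvection hij c ∈ Uplus n m k := by
  intro x y
  rw [transvection_apply]
  obtain ⟨rfl, rfl⟩ | hxy := em (i = x ∧ j = y)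
  · rw [if_neg hij, if_pos ⟨hi, hj⟩, if_neg hij, if_pos ⟨rfl, rfl⟩, zero_add]
    exact hc
  · rw [if_neg hxy, add_zero]
    split_ifs
    exacts [rfl, dvd_zero _, rfl]

lemma transvection_mem_Uminus (hij : i ≠ j) (hi : m ≤ (i : ℕ)) (hj : (j : ℕ) < m)
    (hc : (k : ℤ) ∣ c) : Matrix.SpecialLinearGroup.transvection hij c ∈ Uminus n m k := by
  intro x y
  rw [transvection_apply]
  obtain ⟨rfl, rfl⟩ | hxy := em (i = x ∧ j = y)
  · rw [if_neg hij, if_pos ⟨hi, hj⟩, if_neg hij, if_pos ⟨rfl, rfl⟩, zero_add]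
    exact hc
  · rw [if_neg hxy, add_zero]
    split_ifs
    exacts [rfl, dvd_zero _, rfl]

lemma transvection_mem_Mblock (h : m ≤ n) (hij : i ≠ j) (hblock : (i : ℕ) < m ↔ (j : ℕ) < m)
    (hc : (k : ℤ) ∣ c) : Matrix.SpecialLinearGroup.transvection hij c ∈ Mblock n m k h := by
  refine ⟨fun x y hxy => ?_, fun x y => ?_,
    det_submatrix_transvection (Fin.castLE_injective h) hij c,
    det_submatrix_transvection (fun x y hxy => ?_) hij c⟩
  · rw [transvection_apply]
    grind
  · rw [transvection_apply, add_sub_cancel_left]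
    split_ifs
    exacts [hc, dvd_zero _]
  · simpa [Fin.ext_iff] using hxy

lemma elementarySubgroup_le_Fgroup (h : m ≤ n) :
    elementarySubgroup (Fin n) (Ideal.span {(k : ℤ)}) ≤ Fgroup n m k h := by
  rw [elementarySubgroup, Subgroup.closure_le]
  rintro _ ⟨⟨i, j, hij, c⟩, hc, rfl⟩
  have hkc : (k : ℤ) ∣ c := Ideal.mem_span_singleton.1 hc
  apply Subgroup.subset_closure
  by_cases hi : (i : ℕ) < m <;> by_cases hj : (j : ℕ) < m
  · exact Or.inr (transvection_mem_Mblock h hij (iff_of_true hi hj) hkc)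
  · exact Or.inl (Or.inl (transvection_mem_Uplus hij hi (not_lt.1 hj) hkc))
  · exact Or.inl (Or.inr (transvection_mem_Uminus hij (not_lt.1 hi) hj hkc))
  · exact Or.inr (transvection_mem_Mblock h hij (iff_of_false hi hj) hkc)

lemma GammaCl_le (h : m ≤ n) {N : ℕ} (hN : 1 ≤ N) :
    GammaCl n m k h ≤ Fgroup n m k h ⊔ principalCongruenceSubgroup (Fin n) (Ideal.span {(N : ℤ)}) :=
  sInf_le ⟨⟨N, hN, fun _ hg => Subgroup.mem_sup_right <| mem_principalCongruenceSubgroup.2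
    fun i j => Ideal.mem_span_singleton.2 (hg i j)⟩, le_sup_left⟩

end Block

/-- For `n ≥ 3`, `1 ≤ m < n`, `k ≥ 1`: the commutator subgroup of the
congruence closure `Γ_k` of `F(k)` is contained in `F(k)`. -/
theorem commutator_of_congruence_closure_le (n m k : ℕ)
    (hn : 3 ≤ n) (hm : 1 ≤ m) (hmn : m < n) (hk : 1 ≤ k) :
    ⁅GammaCl n m k hmn.le, GammaCl n m k hmn.le⁆ ≤ Fgroup n m k hmn.le := by
  have hclosure : GammaCl n m k hmn.le ≤ Fgroup n m k hmn.le ⊔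
      principalCongruenceSubgroup (Fin n) (Ideal.span {(k : ℤ)} * Ideal.span {(k : ℤ)}) := by
    rw [Ideal.span_singleton_mul_span_singleton, ← Nat.cast_mul]
    exact GammaCl_le hmn.le (Nat.mul_pos hk hk)
  exact (Subgroup.commutator_mono hclosure hclosure).trans <|
    commutator_sup_principalCongruenceSubgroup_le (by rwa [Fintype.card_fin])
      (elementarySubgroup_le_Fgroup hmn.le)
end

section
/- Let n ≥ 2, let 1 ≤ m < n, let p be a prime and let k ≥ 1 be an integer. Then there exists an integer N ≥ 1 such that every g ∈ SL_n(ℤ_p) with g ≡ 1 mod p^N can be written as g = v·q, where v ∈ SL_n(ℤ_p) is of the form I + X with X supported in the bottom-left (n−m)×m block and all entries of X lying in kℤ_p, and q ∈ SL_n(ℤ_p) is block upper triangular (its bottom-left (n−m)×m block is zero) and satisfies q ≡ 1 mod k. -/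
/-!
Write `A` and `C` for the upper left and lower left blocks of `g`. If `g` is congruent to `1` modulo
an ideal contained in the Jacobson radical, then `det A` is congruent to `1`, hence a unit.
Subtracting `C A⁻¹` times the upper rows of `g` from the lower ones kills `C`, and the entries of
`C A⁻¹` lie in every ideal that contains those of `C`.
-/

open Matrix
open scoped Pointwise

section BigCell

variable {ι R : Type*} [Fintype ι] [DecidableEq ι] [CommRing R]

variable (ι) in
/-- The principal congruence subgroup of `SL(ι, R)` of level `I`: the matrices congruent to `1`
modulo `I`. -/
def principalCongruence (I : Ideal R) : Subgroup (Matrix.SpecialLinearGroup ι R) :=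
  (Matrix.SpecialLinearGroup.map (Ideal.Quotient.mk I)).ker

/-- The standard parabolic `P` of `SL(ι, R)` attached to a set `s` of indices, as a set: the
matrices that preserve the span of the basis vectors indexed by `s`. For `ι = Fin n` and `s` the
first `m` indices, these are the block upper triangular matrices of type `(m, n - m)`. -/
def parabolic (s : Set ι) : Set (Matrix.SpecialLinearGroup ι R) :=
  {q | ∀ i ∉ s, ∀ j ∈ s, q i j = 0}

/-- The unipotent radical `U⁻` of the parabolic opposite to `parabolic s`, as a set: the matrices
that agree with `1` outside the block with rows in `sᶜ` and columns in `s`. -/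
def oppositeUnipotent (s : Set ι) : Set (Matrix.SpecialLinearGroup ι R) :=
  {v | ∀ i j, ¬(i ∉ s ∧ j ∈ s) → v i j = (1 : Matrix ι ι R) i j}

lemma mem_principalCongruence_iff_map {I : Ideal R} {g : Matrix.SpecialLinearGroup ι R} :
    g ∈ principalCongruence ι I ↔ g.1.map (Ideal.Quotient.mk I) = 1 :=
  MonoidHom.mem_ker.trans Subtype.ext_iff

lemma mem_principalCongruence {I : Ideal R} {g : Matrix.SpecialLinearGroup ι R} :
    g ∈ principalCongruence ι I ↔ ∀ i j, g i j - (1 : Matrix ι ι R) i j ∈ I := by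
  rw [mem_principalCongruence_iff_map,
    ← Matrix.map_one (Ideal.Quotient.mk I) (map_zero _) (map_one _), ← Matrix.ext_iff]
  exact forall₂_congr fun i j ↦ Ideal.Quotient.eq

lemma mem_principalCongruence_span_singleton {a : R} {g : Matrix.SpecialLinearGroup ι R} :
    g ∈ principalCongruence ι (Ideal.span {a}) ↔ ∀ i j, a ∣ g i j - if i = j then 1 else 0 := by
  simp only [mem_principalCongruence, Ideal.mem_span_singleton, one_apply]

lemma mem_oppositeUnipotent_inter_principalCongruence_span_singleton {s : Set ι}
    [DecidablePred (· ∈ s)] {a : R} {v : Matrix.SpecialLinearGroup ι R} :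
    v ∈ oppositeUnipotent s ∩ principalCongruence ι (Ideal.span {a}) ↔
      ∀ i j, if i = j then v i j = 1 else if i ∉ s ∧ j ∈ s then a ∣ v i j else v i j = 0 := by
  simp only [Set.mem_inter_iff, SetLike.mem_coe, mem_principalCongruence_span_singleton,
    oppositeUnipotent, Set.mem_ofPred_eq, ← forall_and]
  refine forall₂_congr fun i j ↦ ?_
  split_ifs with hij h
  · subst hij
    simp +contextual
  · simp [hij, h]
  · simp +contextual [hij, h]

lemma principalCongruence_mono : Monotone (principalCongruence ι : Ideal R → Subgroup _) :=
  fun _ _ hIJ _ hg ↦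
    mem_principalCongruence.2 fun i j ↦ hIJ (mem_principalCongruence.1 hg i j)

lemma toBlock_map_eq_zero_of_mem_principalCongruence {I : Ideal R}
    {g : Matrix.SpecialLinearGroup ι R} (hg : g ∈ principalCongruence ι I) {p q : ι → Prop}
    (hpq : Disjoint p q) :
    (g.1.toBlock p q).map (Ideal.Quotient.mk I) = 0 := by
  rw [← toBlock_one_disjoint hpq, ← mem_principalCongruence_iff_map.1 hg]
  rfl

lemma isUnit_det_toBlock_of_mem_principalCongruence {I : Ideal R} (hI : I ≤ Ideal.jacobson ⊥)
    {g : Matrix.SpecialLinearGroup ι R} (hg : g ∈ principalCongruence ι I) (p : ι → Prop)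
    [DecidablePred p] : IsUnit (g.1.toBlock p p).det := by
  have : IsLocalHom (Ideal.Quotient.mk I) := isLocalHom_of_le_jacobson_bot I hI
  have h_map : (Ideal.Quotient.mk I).mapMatrix (g.1.toBlock p p) = 1 := by
    rw [← toBlock_one_self p, ← mem_principalCongruence_iff_map.1 hg]
    rfl
  refine isUnit_of_map_unit (Ideal.Quotient.mk I) _ ?_
  rw [RingHom.map_det, h_map, det_one]
  exact isUnit_one

section LowerUnipotent

variable {s : Set ι} [DecidablePred (· ∈ s)]

/-- The element `1 + X` of `U⁻`, where `X` is placed in the block with rows in `sᶜ` and columns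
in `s`. -/
def lowerUnipotent (X : Matrix {i // i ∉ s} {i // i ∈ s} R) : Matrix.SpecialLinearGroup ι R :=
  ⟨reindex (Equiv.sumCompl (· ∈ s)) (Equiv.sumCompl (· ∈ s)) (fromBlocks 1 0 X 1), by
    rw [det_reindex_self, det_fromBlocks_zero₁₂, det_one, det_one, one_mul]⟩

lemma lowerUnipotent_apply_sumCompl (X : Matrix {i // i ∉ s} {i // i ∈ s} R)
    (a b : {i // i ∈ s} ⊕ {i // i ∉ s}) :
    lowerUnipotent X (Equiv.sumCompl (· ∈ s) a) (Equiv.sumCompl (· ∈ s) b) =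
      fromBlocks 1 0 X 1 a b := by
  change fromBlocks 1 0 X 1 ((Equiv.sumCompl (· ∈ s)).symm _) ((Equiv.sumCompl (· ∈ s)).symm _) = _
  rw [Equiv.symm_apply_apply, Equiv.symm_apply_apply]

lemma lowerUnipotent_neg (X : Matrix {i // i ∉ s} {i // i ∈ s} R) :
    lowerUnipotent (-X) = (lowerUnipotent X)⁻¹ := by
  have h_mul : (lowerUnipotent (-X)).1 * (lowerUnipotent X).1 = 1 := by
    simp [lowerUnipotent, submatrix_mul_equiv, fromBlocks_multiply]
  exact eq_inv_of_mul_eq_one_left (Subtype.ext h_mul)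

lemma lowerUnipotent_mem_oppositeUnipotent (X : Matrix {i // i ∉ s} {i // i ∈ s} R) :
    lowerUnipotent X ∈ oppositeUnipotent s := by
  intro i j h
  obtain ⟨a, rfl⟩ := (Equiv.sumCompl (· ∈ s)).surjective i
  obtain ⟨b, rfl⟩ := (Equiv.sumCompl (· ∈ s)).surjective j
  rw [lowerUnipotent_apply_sumCompl]
  rcases a with a | a <;> rcases b with b | b
  · simp [one_apply, Subtype.coe_inj]
  · simp [one_apply, ne_of_mem_of_not_mem a.2 b.2]
  · exact absurd ⟨a.2, b.2⟩ h
  · simp [one_apply, Subtype.coe_inj]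

lemma lowerUnipotent_mem_principalCongruence {I : Ideal R}
    {X : Matrix {i // i ∉ s} {i // i ∈ s} R} (hX : X.map (Ideal.Quotient.mk I) = 0) :
    lowerUnipotent X ∈ principalCongruence ι I := by
  rw [mem_principalCongruence_iff_map]
  simp [lowerUnipotent, ← submatrix_map, fromBlocks_map, hX]

lemma toBlock_lowerUnipotent_mul (X : Matrix {i // i ∉ s} {i // i ∈ s} R)
    (g : Matrix.SpecialLinearGroup ι R) :
    (lowerUnipotent X * g).1.toBlock (· ∉ s) (· ∈ s) =
      X * g.1.toBlock (· ∈ s) (· ∈ s) + g.1.toBlock (· ∉ s) (· ∈ s) := by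
  have h_lower_left : (lowerUnipotent X).1.toBlock (· ∉ s) (· ∈ s) = X :=
    Matrix.ext fun i j ↦ lowerUnipotent_apply_sumCompl X (.inr i) (.inl j)
  have h_lower_right : (lowerUnipotent X).1.toBlock (· ∉ s) (· ∉ s) = 1 :=
    Matrix.ext fun i j ↦ lowerUnipotent_apply_sumCompl X (.inr i) (.inr j)
  rw [Matrix.SpecialLinearGroup.coe_mul, toBlock_mul_eq_add (· ∉ s) (· ∈ s) (· ∈ s),
    h_lower_left, h_lower_right, Matrix.one_mul]

end LowerUnipotent

theorem principalCongruence_subset_oppositeUnipotent_mul_parabolic {I : Ideal R}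
    (hI : I ≤ Ideal.jacobson ⊥) (s : Set ι) :
    (principalCongruence ι I : Set (Matrix.SpecialLinearGroup ι R)) ⊆
      (oppositeUnipotent s ∩ principalCongruence ι I) *
        (parabolic s ∩ principalCongruence ι I) := by
  classical
  intro g hg
  set A := g.1.toBlock (· ∈ s) (· ∈ s)
  set C := g.1.toBlock (· ∉ s) (· ∈ s)
  have hA : IsUnit A.det := isUnit_det_toBlock_of_mem_principalCongruence hI hg _
  have hC : C.map (Ideal.Quotient.mk I) = 0 :=
    toBlock_map_eq_zero_of_mem_principalCongruence hg disjoint_compl_left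
  set v := lowerUnipotent (C * A⁻¹)
  have hv : v ∈ principalCongruence ι I :=
    lowerUnipotent_mem_principalCongruence (by rw [Matrix.map_mul, hC, Matrix.zero_mul])
  have h_lower_left : (v⁻¹ * g).1.toBlock (· ∉ s) (· ∈ s) = 0 := by
    rw [← lowerUnipotent_neg, toBlock_lowerUnipotent_mul, Matrix.neg_mul,
      nonsing_inv_mul_cancel_right A C hA, neg_add_cancel]
  refine ⟨v, ⟨lowerUnipotent_mem_oppositeUnipotent _, hv⟩, v⁻¹ * g, ⟨fun i hi j hj ↦ ?_, ?_⟩,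
    mul_inv_cancel_left v g⟩
  · exact congrFun₂ h_lower_left ⟨i, hi⟩ ⟨j, hj⟩
  · exact mul_mem (inv_mem hv) hg

end BigCell

theorem big_cell_contains_compact_open_general {ι R : Type*} [Fintype ι] [DecidableEq ι]
    [CommRing R] [IsDomain R] [IsDiscreteValuationRing R] {ϖ a : R} (hϖ : Irreducible ϖ)
    (ha : a ≠ 0) (s : Set ι) :
    ∃ N : ℕ, 1 ≤ N ∧
      (principalCongruence ι (Ideal.span {ϖ ^ N}) : Set (Matrix.SpecialLinearGroup ι R)) ⊆
        (oppositeUnipotent s ∩ principalCongruence ι (Ideal.span {a})) *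
          (parabolic s ∩ principalCongruence ι (Ideal.span {a})) := by
  obtain ⟨d, had⟩ := IsDiscreteValuationRing.associated_pow_irreducible ha hϖ
  have h_le : Ideal.span {ϖ ^ (d + 1)} ≤ Ideal.span {a} :=
    Ideal.span_singleton_le_span_singleton.2 (had.dvd.trans (pow_dvd_pow ϖ d.le_succ))
  -- The extra factor `ϖ` makes the level a proper ideal even when `a` is a unit.
  have h_jacobson : Ideal.span {ϖ ^ (d + 1)} ≤ Ideal.jacobson ⊥ := by
    rw [IsLocalRing.jacobson_eq_maximalIdeal ⊥ bot_ne_top, Ideal.span_singleton_le_iff_mem]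
    exact Ideal.pow_mem_of_mem _ hϖ.not_isUnit _ d.succ_pos
  refine ⟨d + 1, d.succ_pos,
    (principalCongruence_subset_oppositeUnipotent_mul_parabolic h_jacobson s).trans ?_⟩
  exact Set.mul_subset_mul (Set.inter_subset_inter_right _ (principalCongruence_mono h_le))
    (Set.inter_subset_inter_right _ (principalCongruence_mono h_le))

/-- For `n ≥ 2`, `1 ≤ m < n`, a prime `p` and `k ≥ 1`, there is an `N ≥ 1`
such that every `g ∈ SL_n(ℤ_p)` with `g ≡ 1 mod p^N` factors as `g = v·q` with
`v ∈ U⁻(kℤ_p)` (i.e. `v = I + X`, `X` supported in the bottom-left `(n−m) × m` block with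
entries in `kℤ_p`) and `q ∈ P(kℤ_p)` (block upper triangular and `q ≡ 1 mod k`). -/
theorem big_cell_contains_compact_open (n m k p : ℕ) [Fact p.Prime]
    (hn : 2 ≤ n) (hm : 1 ≤ m) (hmn : m < n) (hk : 1 ≤ k) :
    ∃ N : ℕ, 1 ≤ N ∧
      ∀ g : Matrix.SpecialLinearGroup (Fin n) ℤ_[p],
        (∀ i j : Fin n, ((p : ℤ_[p]) ^ N) ∣ (g.1 i j - if i = j then 1 else 0)) →
        ∃ v q : Matrix.SpecialLinearGroup (Fin n) ℤ_[p],
          (∀ i j : Fin n, if i = j then v.1 i j = 1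
              else if m ≤ (i : ℕ) ∧ (j : ℕ) < m then (k : ℤ_[p]) ∣ v.1 i j
              else v.1 i j = 0) ∧
          (∀ i j : Fin n, m ≤ (i : ℕ) → (j : ℕ) < m → q.1 i j = 0) ∧
          (∀ i j : Fin n, (k : ℤ_[p]) ∣ (q.1 i j - if i = j then 1 else 0)) ∧
          g = v * q := by
  have hk_ne : (k : ℤ_[p]) ≠ 0 := Nat.cast_ne_zero.2 (Nat.one_le_iff_ne_zero.1 hk)
  obtain ⟨N, hN, h_subset⟩ := big_cell_contains_compact_open_general PadicInt.irreducible_p hk_ne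
    {i : Fin n | (i : ℕ) < m}
  refine ⟨N, hN, fun g hg ↦ ?_⟩
  obtain ⟨v, hv, q, ⟨hqP, hq⟩, rfl⟩ := h_subset (mem_principalCongruence_span_singleton.2 hg)
  refine ⟨v, q, ?_, fun i j hi ↦ hqP i hi.not_gt j,
    mem_principalCongruence_span_singleton.1 hq, rfl⟩
  simpa only [Set.mem_ofPred_eq, not_lt] using
    mem_oppositeUnipotent_inter_principalCongruence_span_singleton.1 hv
end

section
/- Let n ≥ 1 and let a, b be coprime positive integers. Let Sp_{2n}(ℤ) denote the group of 2n×2n integer matrices g with gᵀ J g = J, where J = (0, I_n; −I_n, 0). Then the subgroup of Sp_{2n}(ℤ) generated by the principal congruence subgroups {g ∈ Sp_{2n}(ℤ) : g ≡ 1 mod a} and {g ∈ Sp_{2n}(ℤ) : g ≡ 1 mod b} is all of Sp_{2n}(ℤ). -/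
/-!
Write `T_{z,t}` for the transvection `x ↦ x + t B(z,x) z` of an alternating form `B`. Since
`T_{z,s+t} = T_{z,s} T_{z,t}` and `T_{z,t}` is congruent to `1` modulo `t`, every transvection is a
product of elements of the two congruence subgroups, so it is enough that the transvections generate
the isometry group.

Over a Euclidean domain they do. If `B(w,v)` is a unit, a single transvection along `v - w` carries
`w` to `v`. In general, one such transvection replaces a unimodular `w` by a unimodular `w'` for
which `B(w',v)` is a nonzero remainder modulo `B(w,v)`, and Euclidean descent makes the
transvections transitive on unimodular vectors; two further ones make them transitive on hyperbolic
pairs. An isometry `g` that fixes some of the pairs of a symplectic basis maps the next pair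
into the orthogonal complement `L` of the fixed ones, and transvections along vectors of `L` bring
it back without moving the pairs already fixed.
-/

open Matrix

/-- The standard symplectic form `J = (0, I_n; −I_n, 0)` as a block matrix. -/
def Jstd (n : ℕ) : Matrix (Fin n ⊕ Fin n) (Fin n ⊕ Fin n) ℤ :=
  Matrix.fromBlocks 0 1 (-1) 0

/-- The integral symplectic group `Sp_{2n}(ℤ)`: invertible `2n × 2n` integer matrices `g`
with `gᵀ * J * g = J`. -/
def SpZ (n : ℕ) : Subgroup (GL (Fin n ⊕ Fin n) ℤ) where
  carrier := {g | (g.val)ᵀ * Jstd n * g.val = Jstd n}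
  one_mem' := by simp
  mul_mem' := by
    intro a b ha hb
    simp only [Set.mem_setOf_eq, Units.val_mul, Matrix.transpose_mul] at *
    calc (b.val)ᵀ * (a.val)ᵀ * Jstd n * (a.val * b.val)
        = (b.val)ᵀ * ((a.val)ᵀ * Jstd n * a.val) * b.val := by
          simp only [Matrix.mul_assoc]
      _ = (b.val)ᵀ * Jstd n * b.val := by rw [ha]
      _ = Jstd n := hb
  inv_mem' := by
    intro a ha
    simp only [Set.mem_setOf_eq] at *
    have hmul : a.val * (a⁻¹).val = 1 := by
      rw [← Units.val_mul, mul_inv_cancel, Units.val_one]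
    calc ((a⁻¹).val)ᵀ * Jstd n * (a⁻¹).val
        = ((a⁻¹).val)ᵀ * ((a.val)ᵀ * Jstd n * a.val) * (a⁻¹).val := by rw [ha]
      _ = (a.val * (a⁻¹).val)ᵀ * Jstd n * (a.val * (a⁻¹).val) := by
          rw [Matrix.transpose_mul]; simp only [Matrix.mul_assoc]
      _ = Jstd n := by rw [hmul]; simp

namespace AlternatingForm

open LinearMap (BilinForm)
open MulAction (orbit orbit_eq_iff mem_orbit_symm)

section IsometryGroup

variable {R M : Type*} [CommRing R] [AddCommGroup M] [Module R M]

/-- The isometry group of a bilinear form, realised inside the group of linear automorphisms so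
that it acts on `M` by `g • x`. For a nondegenerate alternating form it is the symplectic group. -/
def isometryGroup (B : BilinForm R M) : Subgroup (M ≃ₗ[R] M) where
  carrier := {g | ∀ x y, B (g x) (g y) = B x y}
  mul_mem' hg hh x y := (hg _ _).trans (hh x y)
  one_mem' _ _ := rfl
  inv_mem' {g} hg x y := by
    simpa only [LinearEquiv.mul_apply, LinearEquiv.coe_inv, LinearEquiv.apply_symm_apply]
      using (hg (g⁻¹ x) (g⁻¹ y)).symm

variable {B : BilinForm R M}

lemma form_smul_smul (g : isometryGroup B) (x y : M) : B (g • x) (g • y) = B x y := g.2 x y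

/-- The principal congruence subgroup of level `I` of the isometry group: the isometries `g` with
`g x ≡ x` modulo `I M` for all `x`. -/
def congruenceSubgroup (B : BilinForm R M) (I : Ideal R) : Subgroup (isometryGroup B) :=
  (I • ⊤ : Submodule R M).toAddSubgroup.inertia (isometryGroup B)

lemma mem_congruenceSubgroup {I : Ideal R} {g : isometryGroup B} :
    g ∈ congruenceSubgroup B I ↔ ∀ x, g • x - x ∈ (I • ⊤ : Submodule R M) := Iff.rfl

end IsometryGroup

section Transvections

variable {R M : Type*} [CommRing R] [AddCommGroup M] [Module R M] {B : BilinForm R M}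
  (hB : B.IsAlt)

/-- The symplectic transvection `x ↦ x + t B(z, x) z`. -/
def transvection (z : M) (t : R) : isometryGroup B :=
  ⟨LinearEquiv.transvection (f := t • B z) (v := z) (by simp [hB.self_eq_zero]), fun x y => by
    simp only [LinearEquiv.transvection.apply, LinearMap.smul_apply, smul_eq_mul, map_add,
      map_smul, LinearMap.add_apply, hB.self_eq_zero z, ← hB.neg_eq z x]
    ring⟩

lemma transvection_smul (z : M) (t : R) (x : M) :
    transvection hB z t • x = x + (t * B z x) • z := rfl

lemma transvection_add (z : M) (s t : R) :
    transvection hB z (s + t) = transvection hB z s * transvection hB z t := by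
  refine FaithfulSMul.eq_of_smul_eq_smul fun x : M => ?_
  simp only [mul_smul, transvection_smul, map_add, map_smul, hB.self_eq_zero z]
  module

lemma transvection_smul_of_form_eq_zero {z x : M} (h : B z x = 0) (t : R) :
    transvection hB z t • x = x := by
  rw [transvection_smul, h, mul_zero, zero_smul, add_zero]

lemma transvection_sub_smul {v w : M} {t : R} (h : t * B v w = 1) :
    transvection hB (v - w) t • w = v := by
  rw [transvection_smul, map_sub, LinearMap.sub_apply, hB.self_eq_zero, sub_zero, h, one_smul,
    add_sub_cancel]

lemma transvection_mem_congruenceSubgroup (z : M) {I : Ideal R} {t : R} (ht : t ∈ I) :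
    transvection hB z t ∈ congruenceSubgroup B I := fun x => by
  rw [transvection_smul, add_sub_cancel_left]
  exact Submodule.smul_mem_smul (I.mul_mem_right _ ht) Submodule.mem_top

/-- The subgroup of the isometry group generated by the symplectic transvections. -/
def transvectionGroup : Subgroup (isometryGroup B) :=
  Subgroup.closure {g | ∃ z t, transvection hB z t = g}

lemma transvection_mem (z : M) (t : R) : transvection hB z t ∈ transvectionGroup hB :=
  Subgroup.subset_closure ⟨z, t, rfl⟩

lemma transvectionGroup_le_sup_congruenceSubgroup {I J : Ideal R} (hIJ : IsCoprime I J) :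
    transvectionGroup hB ≤ congruenceSubgroup B I ⊔ congruenceSubgroup B J := by
  rw [transvectionGroup, Subgroup.closure_le]
  rintro _ ⟨z, t, rfl⟩
  obtain ⟨i, hi, j, hj, hij⟩ := Ideal.isCoprime_iff_exists.1 hIJ
  have ht : t = t * i + t * j := by rw [← mul_add, hij, mul_one]
  rw [ht, transvection_add]
  exact Subgroup.mul_mem_sup
    (transvection_mem_congruenceSubgroup hB z (I.mul_mem_left t hi))
    (transvection_mem_congruenceSubgroup hB z (J.mul_mem_left t hj))

lemma exists_extension {L : Submodule R M} (hL : (B.restrict L).IsAlt)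
    {k : isometryGroup (B.restrict L)} (hk : k ∈ transvectionGroup hL) :
    ∃ g ∈ transvectionGroup hB,
      (∀ x : L, g • (x : M) = (k • x : L)) ∧ ∀ x ∈ B.orthogonal L, g • x = x := by
  induction hk using Subgroup.closure_induction with
  | mem _ hk =>
    obtain ⟨z, t, rfl⟩ := hk
    exact ⟨transvection hB z t, transvection_mem hB _ t, fun _ => rfl,
      fun x hx => transvection_smul_of_form_eq_zero hB (hx z z.2) t⟩
  | one => exact ⟨1, one_mem _, fun x => by simp only [one_smul], fun x _ => one_smul _ x⟩
  | mul k l _ _ hk hl =>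
    obtain ⟨g, hg, hgk, hgL⟩ := hk
    obtain ⟨h, hh, hhl, hhL⟩ := hl
    exact ⟨g * h, mul_mem hg hh, fun x => by simp only [mul_smul, hhl, hgk],
      fun x hx => by rw [mul_smul, hhL x hx, hgL x hx]⟩
  | inv k _ hk =>
    obtain ⟨g, hg, hgk, hgL⟩ := hk
    exact ⟨g⁻¹, inv_mem hg, fun x => by rw [inv_smul_eq_iff, hgk, smul_inv_smul],
      fun x hx => by rw [inv_smul_eq_iff, hgL x hx]⟩

lemma mem_orbit_of_isUnit {v w : M} (h : IsUnit (B v w)) :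
    v ∈ orbit (transvectionGroup hB) w := by
  obtain ⟨t, ht⟩ := h.exists_left_inv
  exact ⟨⟨transvection hB (v - w) t, transvection_mem hB _ t⟩, transvection_sub_smul hB ht⟩

/-- First `T_{e, t}` with `t = 1 - B(p, f)` makes the pairing of `p` with `f` equal to `1`. -/
lemma exists_fix_smul_eq {e f p : M} (hef : B e f = 1) (hep : B e p = 1) :
    ∃ k ∈ transvectionGroup hB, k • e = e ∧ k • p = f := by
  set q := p + (1 - B p f) • e with hq
  have hqf : B q f = 1 := by
    simp only [hq, map_add, map_smul, LinearMap.add_apply, LinearMap.smul_apply, smul_eq_mul, hef]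
    ring
  have heq : B e q = 1 := by
    rw [hq, map_add, map_smul, hep, hB.self_eq_zero, smul_zero, add_zero]
  have hfq : -1 * B f q = 1 := by rw [← hB.neg_eq q f, hqf, neg_mul_neg, one_mul]
  have hpq : transvection hB e (1 - B p f) • p = q := by
    rw [transvection_smul, hep, mul_one]
  have hfqe : B (f - q) e = 0 := by
    rw [← hB.neg_eq e, map_sub, hef, heq, sub_self, neg_zero]
  refine ⟨transvection hB (f - q) (-1) * transvection hB e (1 - B p f),
    mul_mem (transvection_mem hB _ _) (transvection_mem hB _ _), ?_, ?_⟩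
  · rw [mul_smul, transvection_smul_of_form_eq_zero hB (hB.self_eq_zero e),
      transvection_smul_of_form_eq_zero hB hfqe]
  · rw [mul_smul, hpq, transvection_sub_smul hB hfq]

end Transvections

section Unimodular

variable {R M : Type*} [CommRing R] [AddCommGroup M] [Module R M] {B : BilinForm R M}

/-- A vector is unimodular for `B` if it pairs to `1` with some vector. -/
def IsUnimodular (B : BilinForm R M) (v : M) : Prop := ∃ z, B z v = 1

lemma isUnimodular_of_form_eq_one (hB : B.IsAlt) {v w : M} (h : B v w = 1) :
    IsUnimodular B v :=
  ⟨-w, by rw [map_neg, LinearMap.neg_apply, hB.neg_eq, h]⟩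

/-- Were `B(z, v)` divisible by `d` for all `z` with `B(z, w) = 1`, it would be so for all `z`,
because such `z` span `M`; unimodularity of `v` then makes `d` a unit. -/
lemma exists_not_dvd_of_not_isUnit {v w : M} (hv : IsUnimodular B v) (hw : IsUnimodular B w)
    {d : R} (hd : ¬IsUnit d) : ∃ z, B z w = 1 ∧ ¬d ∣ B z v := by
  by_contra! hdvd
  obtain ⟨y, hy⟩ := hv
  obtain ⟨z, hz⟩ := hw
  have hyz : d ∣ B (y + (1 - B y w) • z) v := hdvd _ (by
    simp only [map_add, map_smul, LinearMap.add_apply, LinearMap.smul_apply, hz, smul_eq_mul]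
    ring)
  rw [map_add, map_smul, LinearMap.add_apply, LinearMap.smul_apply, smul_eq_mul, hy] at hyz
  exact hd (isUnit_of_dvd_one ((dvd_add_left ((hdvd z hz).mul_left _)).1 hyz))

end Unimodular

section Euclidean

variable {R M : Type*} [EuclideanDomain R] [AddCommGroup M] [Module R M] {B : BilinForm R M}
  (hB : B.IsAlt)

/-- Take `w' = z - q w` with `B(z, w) = 1`: for the right `q` it pairs with `v` to a nonzero
remainder modulo `B(w, v)`. -/
lemma exists_mem_orbit_form_lt {v w : M} (hv : IsUnimodular B v) (hw : IsUnimodular B w)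
    (hwv : ¬IsUnit (B w v)) :
    ∃ w' ∈ orbit (transvectionGroup hB) w, IsUnimodular B w' ∧ B w' v ≠ 0 ∧
      (B w v ≠ 0 → EuclideanDomain.r (B w' v) (B w v)) := by
  obtain ⟨z, hzw, hzv⟩ := exists_not_dvd_of_not_isUnit hv hw hwv
  set w' := z - (B z v / B w v) • w with hw'
  have hw'w : B w' w = 1 := by
    rw [hw', map_sub, map_smul, LinearMap.sub_apply, LinearMap.smul_apply, hB.self_eq_zero,
      smul_zero, sub_zero, hzw]
  have hw'v : B w' v = B z v % B w v := by
    rw [hw', map_sub, map_smul, LinearMap.sub_apply, LinearMap.smul_apply, smul_eq_mul,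
      EuclideanDomain.mod_eq_sub_mul_div, mul_comm]
  refine ⟨w', mem_orbit_of_isUnit hB (hw'w ▸ isUnit_one), isUnimodular_of_form_eq_one hB hw'w,
    ?_, fun h => ?_⟩
  · rwa [hw'v, Ne, EuclideanDomain.mod_eq_zero]
  · exact hw'v ▸ EuclideanDomain.mod_lt _ h

lemma mem_orbit_of_form_ne_zero {v w : M} (hv : IsUnimodular B v) (hw : IsUnimodular B w)
    (hwv : B w v ≠ 0) : v ∈ orbit (transvectionGroup hB) w := by
  induction w using
      WellFounded.induction (InvImage.wf (fun w => B w v) EuclideanDomain.r_wellFounded) with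
  | h w ih =>
    by_cases hunit : IsUnit (B w v)
    · exact mem_orbit_symm.1 (mem_orbit_of_isUnit hB hunit)
    · obtain ⟨w', hw'w, hw', hw'v, hlt⟩ := exists_mem_orbit_form_lt hB hv hw hunit
      exact orbit_eq_iff.2 hw'w ▸ ih w' (hlt hwv) hw' hw'v

theorem mem_orbit_of_isUnimodular {v w : M} (hv : IsUnimodular B v) (hw : IsUnimodular B w) :
    v ∈ orbit (transvectionGroup hB) w := by
  by_cases hwv : B w v = 0
  · obtain ⟨w', hw'w, hw', hw'v, -⟩ :=
      exists_mem_orbit_form_lt hB hv hw (hwv ▸ not_isUnit_zero)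
    exact orbit_eq_iff.2 hw'w ▸ mem_orbit_of_form_ne_zero hB hv hw' hw'v
  · exact mem_orbit_of_form_ne_zero hB hv hw hwv

theorem exists_smul_hyperbolic_pair_eq {e f e' f' : M} (hef : B e f = 1) (hef' : B e' f' = 1) :
    ∃ k ∈ transvectionGroup hB, k • e' = e ∧ k • f' = f := by
  obtain ⟨⟨k, hk⟩, hke⟩ := mem_orbit_of_isUnimodular hB
    (isUnimodular_of_form_eq_one hB hef) (isUnimodular_of_form_eq_one hB hef')
  change k • e' = e at hke
  have hkf : B e (k • f') = 1 := by rw [← hke, form_smul_smul, hef']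
  obtain ⟨l, hl, hle, hlf⟩ := exists_fix_smul_eq hB hef hkf
  exact ⟨l * k, mul_mem hl hk, by rw [mul_smul, hke, hle], by rw [mul_smul, hlf]⟩

lemma exists_smul_hyperbolic_pair_eq_of_mem {L : Submodule R M} {e f e' f' : M} (he : e ∈ L)
    (hf : f ∈ L) (he' : e' ∈ L) (hf' : f' ∈ L) (hef : B e f = 1) (hef' : B e' f' = 1) :
    ∃ k ∈ transvectionGroup hB,
      (∀ x ∈ B.orthogonal L, k • x = x) ∧ k • e' = e ∧ k • f' = f := by
  have hL : (B.restrict L).IsAlt := fun x => hB x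
  obtain ⟨k, hk, hke, hkf⟩ := exists_smul_hyperbolic_pair_eq hL
    (e := ⟨e, he⟩) (f := ⟨f, hf⟩) (e' := ⟨e', he'⟩) (f' := ⟨f', hf'⟩) hef hef'
  obtain ⟨g, hg, hgk, hgL⟩ := exists_extension hB hL hk
  exact ⟨g, hg, hgL, by rw [hgk ⟨e', he'⟩, hke], by rw [hgk ⟨f', hf'⟩, hkf]⟩

end Euclidean

section SymplecticBasis

/-- A symplectic basis `(e i, f i)` of a module with a bilinear form. Linear independence is not
a field because it follows from the pairings when `B` is alternating. -/
structure IsSymplecticBasis {R M ι : Type*} [CommRing R] [AddCommGroup M] [Module R M]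
    (B : BilinForm R M) (e f : ι → M) : Prop where
  form_left_left : ∀ i j, B (e i) (e j) = 0
  form_right_right : ∀ i j, B (f i) (f j) = 0
  form_left_right : ∀ i, B (e i) (f i) = 1
  form_left_right_of_ne : ∀ i j, i ≠ j → B (e i) (f j) = 0
  span_eq_top : Submodule.span R (Set.range e ∪ Set.range f) = ⊤

section CommRing

variable {R M ι : Type*} [CommRing R] [AddCommGroup M] [Module R M] {B : BilinForm R M}
  {e f : ι → M}

lemma mem_orthogonal_span {s : Set M} {x : M} :
    x ∈ B.orthogonal (Submodule.span R s) ↔ ∀ y ∈ s, B y x = 0 :=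
  Submodule.span_le (p := LinearMap.ker (B.flip x))

lemma smul_mem_orthogonal_span {s : Set M} {g : isometryGroup B} (hg : ∀ y ∈ s, g • y = y) {x : M}
    (hx : x ∈ B.orthogonal (Submodule.span R s)) :
    g • x ∈ B.orthogonal (Submodule.span R s) :=
  mem_orthogonal_span.2 fun y hy => by
    rw [← hg y hy, form_smul_smul, mem_orthogonal_span.1 hx y hy]

namespace IsSymplecticBasis

lemma mem_orthogonal (hB : B.IsAlt) (h : IsSymplecticBasis B e f) {S : Set ι} {j : ι}
    (hj : j ∉ S) :
    e j ∈ B.orthogonal (Submodule.span R (e '' S ∪ f '' S)) ∧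
      f j ∈ B.orthogonal (Submodule.span R (e '' S ∪ f '' S)) := by
  have hne : ∀ i ∈ S, i ≠ j := fun i hi hij => hj (hij ▸ hi)
  simp only [mem_orthogonal_span, Set.mem_union, or_imp, forall_and, Set.forall_mem_image]
  exact ⟨⟨fun i _ => h.form_left_left i j, fun i hi => by
      rw [← hB.neg_eq, h.form_left_right_of_ne j i (hne i hi).symm, neg_zero]⟩,
    fun i hi => h.form_left_right_of_ne i j (hne i hi), fun i _ => h.form_right_right i j⟩

lemma eq_one_of_smul_eq (h : IsSymplecticBasis B e f) {g : isometryGroup B}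
    (hg : ∀ x ∈ Set.range e ∪ Set.range f, g • x = x) : g = 1 :=
  Subtype.ext (LinearEquiv.toLinearMap_injective (LinearMap.ext_on h.span_eq_top hg))

end IsSymplecticBasis

end CommRing

variable {R M ι : Type*} [EuclideanDomain R] [AddCommGroup M] [Module R M] {B : BilinForm R M}
  {e f : ι → M}

namespace IsSymplecticBasis

lemma exists_mul_smul_eq (hB : B.IsAlt) (h : IsSymplecticBasis B e f) (g : isometryGroup B)
    {S : Set ι} (hS : S.Finite) :
    ∃ k ∈ transvectionGroup hB, ∀ x ∈ e '' S ∪ f '' S, (k * g) • x = x := by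
  induction S, hS using Set.Finite.induction_on with
  | empty => exact ⟨1, one_mem _, by simp⟩
  | @insert j S hj _ ih =>
    obtain ⟨k, hk, hkg⟩ := ih
    obtain ⟨he, hf⟩ := h.mem_orthogonal hB hj
    obtain ⟨l, hl, hlS, hle, hlf⟩ := exists_smul_hyperbolic_pair_eq_of_mem hB he hf
      (smul_mem_orthogonal_span hkg he) (smul_mem_orthogonal_span hkg hf)
      (h.form_left_right j) ((form_smul_smul _ _ _).trans (h.form_left_right j))
    have hlkg : ∀ x ∈ e '' S ∪ f '' S, (l * k * g) • x = x := fun x hx => by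
      rw [mul_assoc, mul_smul, hkg x hx,
        hlS x (BilinForm.le_orthogonal_orthogonal hB.isRefl (Submodule.subset_span hx))]
    refine ⟨l * k, mul_mem hl hk, ?_⟩
    simp only [Set.image_insert_eq, Set.insert_union, Set.union_insert, Set.forall_mem_insert]
    rw [mul_assoc] at hlkg ⊢
    exact ⟨(mul_smul _ _ _).trans hlf, (mul_smul _ _ _).trans hle, hlkg⟩

theorem transvectionGroup_eq_top [Finite ι] (hB : B.IsAlt) (h : IsSymplecticBasis B e f) :
    transvectionGroup hB = ⊤ := by
  refine eq_top_iff.2 fun g _ => ?_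
  obtain ⟨k, hk, hkg⟩ := h.exists_mul_smul_eq hB g Set.finite_univ
  rw [Set.image_univ, Set.image_univ] at hkg
  rw [eq_inv_of_mul_eq_one_right (h.eq_one_of_smul_eq hkg)]
  exact inv_mem hk

end IsSymplecticBasis

end SymplecticBasis

section Standard

lemma mem_span_singleton_smul_top_pi {R ι : Type*} [CommRing R] {a : R} {x : ι → R} :
    x ∈ (Ideal.span {a} • ⊤ : Submodule R (ι → R)) ↔ ∀ i, a ∣ x i := by
  rw [Submodule.ideal_span_singleton_smul, Submodule.mem_smul_pointwise_iff_exists]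
  constructor
  · rintro ⟨y, -, rfl⟩ i
    exact dvd_mul_right a (y i)
  · intro h
    choose y hy using h
    exact ⟨y, Submodule.mem_top, funext fun i => (hy i).symm⟩

/-- The alternating form `(x, y) ↦ xᵀ J y` on `ℤ^{2n}`. -/
def stdForm (n : ℕ) : BilinForm ℤ (Fin n ⊕ Fin n → ℤ) := Matrix.toBilin' (Jstd n)

variable {n : ℕ}

lemma isAlt_stdForm : (stdForm n).IsAlt := fun x => by
  rw [stdForm, Matrix.toBilin'_apply', Jstd, Matrix.fromBlocks_mulVec, dotProduct,
    Fintype.sum_sum_type]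
  simp [neg_mulVec, mul_comm]

lemma isSymplecticBasis_single :
    IsSymplecticBasis (stdForm n) (fun i => Pi.single (Sum.inl i) 1)
      (fun i => Pi.single (Sum.inr i) 1) where
  form_left_left i j := by simp [stdForm, Jstd]
  form_right_right i j := by simp [stdForm, Jstd]
  form_left_right i := by simp [stdForm, Jstd]
  form_left_right_of_ne i j hij := by simp [stdForm, Jstd, hij]
  span_eq_top := by
    rw [← Set.Sum.elim_range, ← (Pi.basisFun ℤ (Fin n ⊕ Fin n)).span_eq]
    congr 2
    ext (i | i) : 1 <;> simp

/-- The isomorphism from `GL m R` to the group of linear automorphisms of `m → R`. -/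
def glEquiv (m R : Type*) [Fintype m] [DecidableEq m] [CommRing R] :
    GL m R ≃* ((m → R) ≃ₗ[R] (m → R)) :=
  Matrix.GeneralLinearGroup.toLin.trans (LinearMap.GeneralLinearGroup.generalLinearEquiv R (m → R))

lemma glEquiv_mem_isometryGroup {g : GL (Fin n ⊕ Fin n) ℤ} :
    glEquiv _ _ g ∈ isometryGroup (stdForm n) ↔ g ∈ SpZ n := by
  have hcomp : (stdForm n).comp (toLin' g.val) (toLin' g.val) =
      Matrix.toBilin' (g.valᵀ * Jstd n * g.val) := Matrix.toBilin'_comp _ _ _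
  calc glEquiv _ _ g ∈ isometryGroup (stdForm n)
      ↔ (stdForm n).comp (toLin' g.val) (toLin' g.val) = stdForm n :=
        ⟨fun h => LinearMap.ext₂ h, fun h => LinearMap.congr_fun₂ h⟩
    _ ↔ g ∈ SpZ n := by
        rw [hcomp, stdForm, Matrix.toBilin'.injective.eq_iff]; rfl

/-- The action of `Sp_{2n}(ℤ)` on `ℤ^{2n}`, which identifies it with the isometry group of the
standard form. -/
def spToIsometryGroup (n : ℕ) : SpZ n →* isometryGroup (stdForm n) :=
  ((glEquiv _ ℤ).toMonoidHom.comp (SpZ n).subtype).codRestrict _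
    fun g => glEquiv_mem_isometryGroup.2 g.2

lemma spToIsometryGroup_smul (g : SpZ n) (x : Fin n ⊕ Fin n → ℤ) :
    spToIsometryGroup n g • x = g.val.val *ᵥ x := rfl

lemma spToIsometryGroup_surjective : Function.Surjective (spToIsometryGroup n) := by
  rintro ⟨g, hg⟩
  obtain ⟨g, rfl⟩ := (glEquiv _ ℤ).surjective g
  exact ⟨⟨g, glEquiv_mem_isometryGroup.1 hg⟩, rfl⟩

lemma mem_comap_congruenceSubgroup {a : ℤ} {g : SpZ n} :
    g ∈ (congruenceSubgroup (stdForm n) (Ideal.span {a})).comap (spToIsometryGroup n) ↔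
      ∀ i j, a ∣ g.val.val i j - if i = j then 1 else 0 := by
  have hsub (x : Fin n ⊕ Fin n → ℤ) :
      spToIsometryGroup n g • x - x = (g.val.val - 1) *ᵥ x := by
    rw [spToIsometryGroup_smul, sub_mulVec, one_mulVec]
  simp only [Subgroup.mem_comap, mem_congruenceSubgroup, hsub, mem_span_singleton_smul_top_pi,
    ← Matrix.one_apply, ← Matrix.sub_apply]
  constructor
  · intro h i j
    simpa only [mulVec_single_one, col_apply] using h (Pi.single j 1) i
  · intro h x i
    rw [mulVec, dotProduct]
    exact Finset.dvd_sum fun j _ => (h i j).mul_right (x j)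

lemma closure_congruent_one (n : ℕ) (a : ℤ) :
    Subgroup.closure {g : SpZ n | ∀ i j : Fin n ⊕ Fin n,
      a ∣ ((g : GL (Fin n ⊕ Fin n) ℤ).val i j - if i = j then 1 else 0)} =
    (congruenceSubgroup (stdForm n) (Ideal.span {a})).comap (spToIsometryGroup n) := by
  rw [← Subgroup.closure_eq (Subgroup.comap _ _)]
  congr 1
  ext g
  exact mem_comap_congruenceSubgroup.symm

end Standard

end AlternatingForm

open AlternatingForm

theorem coprime_congruence_subgroups_generate_sp_general {R M ι : Type*} [EuclideanDomain R]
    [AddCommGroup M] [Module R M] [Finite ι] {B : LinearMap.BilinForm R M} (hB : B.IsAlt)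
    {e f : ι → M} (h : IsSymplecticBasis B e f) {I J : Ideal R} (hIJ : IsCoprime I J) :
    congruenceSubgroup B I ⊔ congruenceSubgroup B J = ⊤ :=
  eq_top_iff.2 (h.transvectionGroup_eq_top hB ▸ transvectionGroup_le_sup_congruenceSubgroup hB hIJ)

/-- For `n ≥ 1` and coprime positive integers `a`, `b`, the principal
congruence subgroups of levels `a` and `b` generate all of `Sp_{2n}(ℤ)`. -/
theorem coprime_congruence_subgroups_generate_sp (n a b : ℕ)
    (hn : 1 ≤ n) (ha : 1 ≤ a) (hb : 1 ≤ b) (hab : Nat.Coprime a b) :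
    Subgroup.closure
      ({g : SpZ n | ∀ i j : Fin n ⊕ Fin n,
          (a : ℤ) ∣ ((g : GL (Fin n ⊕ Fin n) ℤ).val i j - if i = j then 1 else 0)} ∪
       {g : SpZ n | ∀ i j : Fin n ⊕ Fin n,
          (b : ℤ) ∣ ((g : GL (Fin n ⊕ Fin n) ℤ).val i j - if i = j then 1 else 0)}) = ⊤ := by
  have hIJ : IsCoprime (Ideal.span {(a : ℤ)}) (Ideal.span {(b : ℤ)}) :=
    Ideal.isCoprime_span_singleton_iff _ _ |>.2 (Nat.isCoprime_iff_coprime.2 hab)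
  rw [Subgroup.closure_union, closure_congruent_one, closure_congruent_one,
    Subgroup.comap_sup_eq _ _ _ spToIsometryGroup_surjective,
    coprime_congruence_subgroups_generate_sp_general isAlt_stdForm isSymplecticBasis_single hIJ,
    Subgroup.comap_top]
end
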